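/- arXiv:1308.2499 — 2 statements merged into one kernel-verified Lean document; each statement's English description precedes it below -/
import Mathlib

section
/- Assume the sub-critical range q > 1 and (2/3)q + 1 < p < q + 2/3. Let γ ∈ W^{(3p−2)/q−1,q}(ℝ/ℤ,ℝⁿ) be injective, parametrized by arc-length, and bi-Lipschitz with constant L, i.e. d_{ℝ/ℤ}(u,v) ≤ L |γ(u) − γ(v)| for all u,v ∈ ℝ/ℤ. Then there is a constant C depending only on p, q and L such that E_{p,q}(γ) ≤ C ‖γ‖^q_{W^{(3p−2)/q−1,q}}. -/
open MeasureTheory Set Filter Topology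
open scoped ENNReal

noncomputable section

/-- The area `|a ∧ b|` of the parallelogram spanned by `a, b ∈ ℝⁿ`. -/
def wedgeNorm {n : ℕ} (a b : EuclideanSpace ℝ (Fin n)) : ℝ :=
  Real.sqrt (‖a‖ ^ 2 * ‖b‖ ^ 2 - (inner ℝ a b : ℝ) ^ 2)

/-- `1 / R^{p,q}(x,y,z) = |(y-x) ∧ (z-x)|^q / (|y-z| |y-x| |z-x|)^p`. -/
def invR {n : ℕ} (p q : ℝ) (x y z : EuclideanSpace ℝ (Fin n)) : ℝ :=
  wedgeNorm (y - x) (z - x) ^ q / (‖y - z‖ * ‖y - x‖ * ‖z - x‖) ^ p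

/-- The generalized integral Menger curvature `E_{p,q}` of a closed curve,
modelled by a `1`-periodic function together with its derivative,
the parameter domain `ℝ/ℤ` being represented by `[0,1)`; values in `[0,∞]`. -/
def menger {n : ℕ} (p q : ℝ) (γ γ' : ℝ → EuclideanSpace ℝ (Fin n)) : ℝ≥0∞ :=
  ∫⁻ u₁ in Ico (0:ℝ) 1, ∫⁻ u₂ in Ico (0:ℝ) 1, ∫⁻ u₃ in Ico (0:ℝ) 1,
    ENNReal.ofReal (‖γ' u₁‖ * ‖γ' u₂‖ * ‖γ' u₃‖ * invR p q (γ u₁) (γ u₂) (γ u₃))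

/-- Injectivity of a `1`-periodic curve as a map on `ℝ/ℤ`. -/
def InjCircle {n : ℕ} (γ : ℝ → EuclideanSpace ℝ (Fin n)) : Prop :=
  ∀ u v : ℝ, γ u = γ v → ∃ k : ℤ, v = u + k

/-- Distance on `ℝ/ℤ`. -/
def circleDist (u v : ℝ) : ℝ := ⨅ k : ℤ, |u - v - (k : ℝ)|

/-- The `ρ`-th power of the Sobolev–Slobodeckiĭ seminorm `[f]_{W^{1+s,ρ}}`
of a periodic function with derivative `f'`; values in `[0,∞]`. -/
def sobSemiPow {n : ℕ} (s ρ : ℝ) (f' : ℝ → EuclideanSpace ℝ (Fin n)) : ℝ≥0∞ :=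
  ∫⁻ u in Ico (0:ℝ) 1, ∫⁻ w in Icc (-(1/2) : ℝ) (1/2),
    ENNReal.ofReal (‖f' (u + w) - f' u‖ ^ ρ / |w| ^ (1 + ρ * s))

/-- The norm `‖f‖_{W^{1+s,ρ}} = ‖f‖_{W^{1,ρ}} + [f]_{W^{1+s,ρ}}`. -/
def sobNorm {n : ℕ} (s ρ : ℝ) (f f' : ℝ → EuclideanSpace ℝ (Fin n)) : ℝ :=
  (∫ u in Ico (0:ℝ) 1, ‖f u‖ ^ ρ) ^ (1/ρ) + (∫ u in Ico (0:ℝ) 1, ‖f' u‖ ^ ρ) ^ (1/ρ)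
    + (sobSemiPow s ρ f').toReal ^ (1/ρ)

/-- `γ` is a closed `W^{1,1}` curve with weak derivative `γ'`:
both are `1`-periodic, `γ'` is measurable and `γ` is the primitive of `γ'`. -/
structure CurvePair {n : ℕ} (γ γ' : ℝ → EuclideanSpace ℝ (Fin n)) : Prop where
  periodic : Function.Periodic γ 1
  periodic' : Function.Periodic γ' 1
  meas' : Measurable γ'
  primitive : ∀ u, γ u = γ 0 + ∫ t in (0:ℝ)..u, γ' t

/-! Every triple on `ℝ/ℤ` has a longest side, so up to a factor `3` it suffices to treat triples
`(u, u + v, u + w)` whose longest side is opposite to `u`. There `γ (u + v) - γ u` is `v` times the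
average of `γ'` over `[u, u + v]`, so the area spanned by the triple is at most a multiple of
`|v| |w|` times the distance between the two averages, while the bi-Lipschitz condition bounds the
sides from below by multiples of `|v|`, `|w|` and `max |v| |w|`. Comparing both averages with `γ' u`
separates the two variables, apart from a homogeneous kernel which integrates in one variable to a
power of the other. A Hardy inequality then replaces the averages by values of `γ'`, and the
Gagliardo seminorm appears. -/

section Integration

variable {α : Type*} [MeasurableSpace α] {μ : Measure α} [SFinite μ]

theorem lintegral_prod_prod {F : α × α × α → ℝ≥0∞} (hF : Measurable F) :
    ∫⁻ a, F a ∂μ.prod (μ.prod μ) = ∫⁻ x, ∫⁻ y, ∫⁻ z, F (x, y, z) ∂μ ∂μ ∂μ := by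
  rw [lintegral_prod _ hF.aemeasurable]
  exact lintegral_congr fun x => lintegral_prod _ (hF.comp measurable_prodMk_left).aemeasurable

theorem measurePreserving_rotate :
    MeasurePreserving (fun a : α × α × α => (a.2.1, a.2.2, a.1))
      (μ.prod (μ.prod μ)) (μ.prod (μ.prod μ)) :=
  (measurePreserving_prodAssoc μ μ μ).comp Measure.measurePreserving_swap

theorem lintegral_sum_rotations {F : α × α × α → ℝ≥0∞} (hF : Measurable F) :
    ∫⁻ x, ∫⁻ y, ∫⁻ z, (F (x, y, z) + F (y, z, x) + F (z, x, y)) ∂μ ∂μ ∂μ =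
      3 * ∫⁻ x, ∫⁻ y, ∫⁻ z, F (x, y, z) ∂μ ∂μ ∂μ := by
  have hρ := measurePreserving_rotate (μ := μ)
  have hF₁ := hρ.lintegral_comp hF
  have hF₂ := (hρ.comp hρ).lintegral_comp hF
  rw [← lintegral_prod_prod hF, ← lintegral_prod_prod
    (F := fun a => F a + F (a.2.1, a.2.2, a.1) + F (a.2.2, a.1, a.2.1)) (by fun_prop),
    lintegral_add_left (by fun_prop), lintegral_add_left hF, hF₁]
  simp only [Function.comp_def] at hF₂
  rw [hF₂]
  ring

theorem lintegral_lintegral_add_mul_of_symm {G : α → ℝ≥0∞} {k : α → α → ℝ≥0∞} (hG : Measurable G)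
    (hk : Measurable (Function.uncurry k)) (hsymm : ∀ x y, k x y = k y x) :
    ∫⁻ x, ∫⁻ y, (G x + G y) * k x y ∂μ ∂μ = 2 * ∫⁻ x, ∫⁻ y, G x * k x y ∂μ ∂μ := by
  have hswap : ∫⁻ x, ∫⁻ y, G y * k x y ∂μ ∂μ = ∫⁻ x, ∫⁻ y, G x * k x y ∂μ ∂μ := by
    rw [lintegral_lintegral_swap (by fun_prop)]
    simp_rw [hsymm]
  have hGk : Measurable fun x => ∫⁻ y, G x * k x y ∂μ :=
    Measurable.lintegral_prod_right' (f := fun a : α × α => G a.1 * k a.1 a.2) (by fun_prop)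
  calc ∫⁻ x, ∫⁻ y, (G x + G y) * k x y ∂μ ∂μ
      = ∫⁻ x, (∫⁻ y, G x * k x y ∂μ) + ∫⁻ y, G y * k x y ∂μ ∂μ :=
        lintegral_congr fun x => by simp_rw [add_mul]; exact lintegral_add_left (by fun_prop) _
    _ = 2 * ∫⁻ x, ∫⁻ y, G x * k x y ∂μ ∂μ := by rw [lintegral_add_left hGk, hswap, two_mul]

theorem lintegral_comp_mul_left (g : ℝ → ℝ≥0∞) {a : ℝ} (ha : a ≠ 0) :
    ∫⁻ x, g (a * x) = ENNReal.ofReal |a⁻¹| * ∫⁻ x, g x := by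
  rw [← (measurableEmbedding_mulLeft₀ ha).lintegral_map, Real.map_volume_mul_left ha,
    lintegral_smul_measure, smul_eq_mul]

theorem setLIntegral_Icc_comp_mul_left_le (g : ℝ → ℝ≥0∞) (r : ℝ) {t : ℝ} (ht : t ∈ Ioc (0 : ℝ) 1) :
    ∫⁻ v in Icc (-r) r, g (t * v) ≤ ENNReal.ofReal t⁻¹ * ∫⁻ w in Icc (-r) r, g w := by
  have hmaps : ∀ v ∈ Icc (-r) r, t * v ∈ Icc (-r) r := fun v hv => by
    refine abs_le.1 ?_
    rw [abs_mul, abs_of_pos ht.1]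
    exact (mul_le_of_le_one_left (abs_nonneg v) ht.2).trans (abs_le.2 hv)
  calc ∫⁻ v in Icc (-r) r, g (t * v)
      = ∫⁻ v in Icc (-r) r, (Icc (-r) r).indicator g (t * v) :=
        setLIntegral_congr_fun measurableSet_Icc fun v hv =>
          (indicator_of_mem (hmaps v hv) g).symm
    _ ≤ ∫⁻ v, (Icc (-r) r).indicator g (t * v) := setLIntegral_le_lintegral _ _
    _ = ENNReal.ofReal t⁻¹ * ∫⁻ w in Icc (-r) r, g w := by
        rw [lintegral_comp_mul_left _ ht.1.ne', lintegral_indicator measurableSet_Icc,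
          abs_of_pos (inv_pos.2 ht.1)]

theorem setLIntegral_dilation_div_abs_rpow_le (h : ℝ → ℝ) {β t : ℝ} (hβ : 1 ≤ β)
    (ht : t ∈ Ioc (0 : ℝ) 1) (r : ℝ) :
    ∫⁻ v in Icc (-r) r, ENNReal.ofReal (h (t * v) / |v| ^ β) ≤
      ∫⁻ w in Icc (-r) r, ENNReal.ofReal (h w / |w| ^ β) := by
  have htβ : 0 < t ^ β := Real.rpow_pos_of_pos ht.1 β
  have hscale : ∀ v, ENNReal.ofReal (h (t * v) / |v| ^ β) =
      ENNReal.ofReal (t ^ β) * ENNReal.ofReal (h (t * v) / |t * v| ^ β) := fun v => by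
    rw [← ENNReal.ofReal_mul htβ.le, abs_mul, abs_of_pos ht.1,
      Real.mul_rpow ht.1.le (abs_nonneg v), ← mul_div_assoc, mul_div_mul_left _ _ htβ.ne']
  have hfactor : ENNReal.ofReal (t ^ β) * ENNReal.ofReal t⁻¹ ≤ 1 := by
    rw [← ENNReal.ofReal_mul htβ.le, ENNReal.ofReal_le_one, ← div_eq_mul_inv,
      div_le_one ht.1]
    simpa using Real.rpow_le_rpow_of_exponent_ge ht.1 ht.2 hβ
  simp_rw [hscale]
  rw [lintegral_const_mul' _ _ ENNReal.ofReal_ne_top]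
  calc _ ≤ ENNReal.ofReal (t ^ β) * (ENNReal.ofReal t⁻¹ *
        ∫⁻ w in Icc (-r) r, ENNReal.ofReal (h w / |w| ^ β)) := by
        gcongr
        exact setLIntegral_Icc_comp_mul_left_le
          (fun w => ENNReal.ofReal (h w / |w| ^ β)) r ht
    _ ≤ _ := by
        rw [← mul_assoc]
        exact mul_le_of_le_one_left' hfactor

end Integration

section IntervalAverage

theorem ofReal_norm_rpow {E : Type*} [NormedAddCommGroup E] (x : E) {q : ℝ} (hq : 0 ≤ q) :
    ENNReal.ofReal (‖x‖ ^ q) = ‖x‖ₑ ^ q := by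
  rw [← ofReal_norm, ENNReal.ofReal_rpow_of_nonneg (norm_nonneg x) hq]

variable {E : Type*} [NormedAddCommGroup E] [NormedSpace ℝ E] {f : ℝ → E}

theorem enorm_integral_rpow_le_lintegral {α : Type*} [MeasurableSpace α] {μ : Measure α}
    [IsProbabilityMeasure μ] {g : α → E} (hg : AEStronglyMeasurable g μ) {q : ℝ} (hq : 1 ≤ q) :
    ‖∫ x, g x ∂μ‖ₑ ^ q ≤ ∫⁻ x, ‖g x‖ₑ ^ q ∂μ := by
  have hq₀ : 0 < q := one_pos.trans_le hq
  have hnorm : ‖∫ x, g x ∂μ‖ₑ ≤ eLpNorm g (ENNReal.ofReal q) μ :=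
    calc ‖∫ x, g x ∂μ‖ₑ ≤ eLpNorm g 1 μ := by
          rw [eLpNorm_one_eq_lintegral_enorm]
          exact enorm_integral_le_lintegral_enorm g
      _ ≤ eLpNorm g (ENNReal.ofReal q) μ :=
          eLpNorm_le_eLpNorm_of_exponent_le (ENNReal.one_le_ofReal.2 hq) hg
  refine (ENNReal.rpow_le_rpow hnorm hq₀.le).trans_eq ?_
  rw [eLpNorm_eq_lintegral_rpow_enorm_toReal (by simpa using hq₀) ENNReal.ofReal_ne_top,
    ENNReal.toReal_ofReal hq₀.le, one_div, ENNReal.rpow_inv_rpow hq₀.ne']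

theorem norm_intervalAverage_le {M : ℝ} (hM : ∀ᵐ x, ‖f x‖ ≤ M) (a b : ℝ) :
    ‖⨍ t in a..b, f t‖ ≤ M := by
  obtain ⟨x, hx⟩ := hM.exists
  have hM₀ : 0 ≤ M := (norm_nonneg _).trans hx
  have hint : ‖∫ t in a..b, f t‖ ≤ M * |b - a| :=
    intervalIntegral.norm_integral_le_of_norm_le_const_ae (hM.mono fun _ h _ => h)
  rw [interval_average_eq, norm_smul, norm_inv, Real.norm_eq_abs, mul_comm]
  exact div_le_of_le_mul₀ (abs_nonneg _) hM₀ hint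

theorem sub_smul_intervalAverage (f : ℝ → E) (a b : ℝ) :
    (b - a) • ⨍ t in a..b, f t = ∫ t in a..b, f t := by
  rcases eq_or_ne a b with rfl | hab
  · simp
  · rw [interval_average_eq, smul_inv_smul₀ (sub_ne_zero.2 hab.symm)]

theorem intervalAverage_eq_integral_comp (f : ℝ → E) (u : ℝ) {v : ℝ} (hv : v ≠ 0) :
    ⨍ t in u..u + v, f t = ∫ t in (0 : ℝ)..1, f (u + v * t) := by
  rw [interval_average_eq, add_sub_cancel_left, inv_smul_eq_iff₀ hv,
    intervalIntegral.smul_integral_comp_add_mul, mul_zero, mul_one, add_zero]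

theorem measurable_intervalAverage [MeasurableSpace E] [BorelSpace E]
    [SecondCountableTopology E] (hf : ∀ a b, IntervalIntegrable f volume a b) (u : ℝ) :
    Measurable fun v => ⨍ t in u..u + v, f t := by
  have hprim : Measurable fun b => ∫ t in u..b, f t :=
    (intervalIntegral.continuous_primitive hf u).measurable
  simp_rw [interval_average_eq]
  fun_prop

variable [CompleteSpace E]

theorem rpow_norm_intervalAverage_sub_le (hf : ∀ a b, IntervalIntegrable f volume a b) {q : ℝ}
    (hq : 1 ≤ q) (c : E) (u : ℝ) {v : ℝ} (hv : v ≠ 0) :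
    ENNReal.ofReal (‖(⨍ t in u..u + v, f t) - c‖ ^ q) ≤
      ∫⁻ t in Ioc (0 : ℝ) 1, ENNReal.ofReal (‖f (u + v * t) - c‖ ^ q) := by
  have hint : IntervalIntegrable (fun t => f (u + v * t)) volume 0 1 := by
    have hshift : IntervalIntegrable (fun t => f (u + t)) volume 0 v := by
      simpa using (hf u (u + v)).comp_add_left u
    simpa [hv] using hshift.comp_mul_left (c := v)
  have havg : (⨍ t in u..u + v, f t) - c = ∫ t in Ioc (0 : ℝ) 1, (f (u + v * t) - c) := by
    rw [intervalAverage_eq_integral_comp f u hv, ← intervalIntegral.integral_of_le zero_le_one,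
      intervalIntegral.integral_sub hint intervalIntegrable_const,
      intervalIntegral.integral_const, sub_zero, one_smul]
  have : IsProbabilityMeasure (volume.restrict (Ioc (0 : ℝ) 1)) := ⟨by simp⟩
  simp_rw [ofReal_norm_rpow _ (zero_le_one.trans hq)]
  rw [havg]
  exact enorm_integral_rpow_le_lintegral
    (hint.aestronglyMeasurable.sub aestronglyMeasurable_const) hq

-- A Hardy inequality: the average over `[u, u + v]` is a mean over `t ∈ (0, 1]` of the dilates
-- `f (u + t v)`, and `β ≥ 1` makes these dilations contract the weighted integral.
theorem setLIntegral_intervalAverage_sub_le [MeasurableSpace E] [BorelSpace E]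
    [SecondCountableTopology E] (hm : Measurable f)
    (hf : ∀ a b, IntervalIntegrable f volume a b) {q β : ℝ} (hq : 1 ≤ q) (hβ : 1 ≤ β)
    (c : E) (u r : ℝ) :
    ∫⁻ v in Icc (-r) r, ENNReal.ofReal (‖(⨍ t in u..u + v, f t) - c‖ ^ q / |v| ^ β) ≤
      ∫⁻ w in Icc (-r) r, ENNReal.ofReal (‖f (u + w) - c‖ ^ q / |w| ^ β) := by
  have hjensen : ∀ v, ENNReal.ofReal (‖(⨍ t in u..u + v, f t) - c‖ ^ q / |v| ^ β) ≤
      ∫⁻ t in Ioc (0 : ℝ) 1, ENNReal.ofReal (‖f (u + t * v) - c‖ ^ q / |v| ^ β) := fun v => by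
    rcases eq_or_ne v 0 with rfl | hv
    · simp [Real.zero_rpow (one_pos.trans_le hβ).ne']
    · simp_rw [div_eq_mul_inv, ENNReal.ofReal_mul (Real.rpow_nonneg (norm_nonneg _) q)]
      rw [lintegral_mul_const _ (by fun_prop)]
      gcongr
      simpa only [mul_comm] using rpow_norm_intervalAverage_sub_le hf hq c u hv
  calc ∫⁻ v in Icc (-r) r, ENNReal.ofReal (‖(⨍ t in u..u + v, f t) - c‖ ^ q / |v| ^ β)
      ≤ ∫⁻ v in Icc (-r) r, ∫⁻ t in Ioc (0 : ℝ) 1,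
          ENNReal.ofReal (‖f (u + t * v) - c‖ ^ q / |v| ^ β) := lintegral_mono hjensen
    _ = ∫⁻ t in Ioc (0 : ℝ) 1, ∫⁻ v in Icc (-r) r,
          ENNReal.ofReal (‖f (u + t * v) - c‖ ^ q / |v| ^ β) :=
        lintegral_lintegral_swap (by unfold Function.uncurry; fun_prop)
    _ ≤ ∫⁻ _ in Ioc (0 : ℝ) 1, ∫⁻ w in Icc (-r) r,
          ENNReal.ofReal (‖f (u + w) - c‖ ^ q / |w| ^ β) :=
        setLIntegral_mono' measurableSet_Ioc fun t ht =>
          setLIntegral_dilation_div_abs_rpow_le (fun w => ‖f (u + w) - c‖ ^ q) hβ ht r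
    _ = _ := by simp

end IntervalAverage

section Curvature

variable {n : ℕ}

theorem wedgeNorm_smul_smul_le (v w : ℝ) (a b : EuclideanSpace ℝ (Fin n)) :
    wedgeNorm (v • a) (w • b) ≤ |v| * |w| * (‖a - b‖ * ‖b‖) := by
  refine Real.sqrt_le_iff.2 ⟨by positivity, ?_⟩
  have harea : ‖a‖ ^ 2 * ‖b‖ ^ 2 - (inner ℝ a b : ℝ) ^ 2 ≤ (‖a - b‖ * ‖b‖) ^ 2 := by
    rw [mul_pow, norm_sub_sq_real]
    linarith [sq_nonneg (‖b‖ ^ 2 - inner ℝ a b)]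
  calc ‖v • a‖ ^ 2 * ‖w • b‖ ^ 2 - (inner ℝ (v • a) (w • b) : ℝ) ^ 2
      = v ^ 2 * w ^ 2 * (‖a‖ ^ 2 * ‖b‖ ^ 2 - (inner ℝ a b : ℝ) ^ 2) := by
        simp only [norm_smul, Real.norm_eq_abs, real_inner_smul_left, real_inner_smul_right,
          mul_pow, sq_abs]
        ring
    _ ≤ v ^ 2 * w ^ 2 * (‖a - b‖ * ‖b‖) ^ 2 := by gcongr
    _ = (|v| * |w| * (‖a - b‖ * ‖b‖)) ^ 2 := by simp only [mul_pow, sq_abs]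

theorem wedgeNorm_sub_neg (a b : EuclideanSpace ℝ (Fin n)) :
    wedgeNorm (b - a) (-a) = wedgeNorm a b := by
  rw [wedgeNorm, wedgeNorm, norm_neg, norm_sub_sq_real, inner_neg_right, inner_sub_left,
    real_inner_self_eq_norm_sq, real_inner_comm]
  congr 1
  ring

theorem invR_rotate (p q : ℝ) (x y z : EuclideanSpace ℝ (Fin n)) :
    invR p q y z x = invR p q x y z := by
  have hwedge : wedgeNorm (z - y) (x - y) = wedgeNorm (y - x) (z - x) := by
    rw [← wedgeNorm_sub_neg (y - x) (z - x), sub_sub_sub_cancel_right, neg_sub]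
  rw [invR, invR, hwedge, norm_sub_rev x y]
  congr 2
  rw [norm_sub_rev z y]
  ring

theorem measurable_invR (p q : ℝ) :
    Measurable fun a : EuclideanSpace ℝ (Fin n) × EuclideanSpace ℝ (Fin n) ×
      EuclideanSpace ℝ (Fin n) => invR p q a.1 a.2.1 a.2.2 := by
  unfold invR wedgeNorm
  fun_prop

end Curvature

section Kernel

/-- The scale-invariant model of `1 / R^{p,q}` at a vertex whose two sides have lengths `|v|` and
`|w|`, the opposite side being the longest. -/
def mengerKernel (p q v w : ℝ) : ℝ :=
  (|v| * |w|) ^ q / (max |v| |w| * |v| * |w|) ^ p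

/-- The constant left after integrating one variable out of `mengerKernel`, which by homogeneity
produces the power `|v| ^ (2 q - 3 p + 1)` of the other. -/
def kernelMass (p q : ℝ) : ℝ≥0∞ :=
  ∫⁻ w : ℝ, ENNReal.ofReal (mengerKernel p q 1 w)

variable {p q : ℝ}

theorem mengerKernel_nonneg (p q v w : ℝ) : 0 ≤ mengerKernel p q v w := by
  unfold mengerKernel
  positivity

theorem mengerKernel_comm (p q v w : ℝ) : mengerKernel p q v w = mengerKernel p q w v := by
  rw [mengerKernel, mengerKernel, max_comm, mul_comm |v| |w|, mul_right_comm]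

theorem measurable_mengerKernel (p q : ℝ) :
    Measurable (Function.uncurry fun v w => ENNReal.ofReal (mengerKernel p q v w)) := by
  unfold mengerKernel Function.uncurry
  fun_prop

theorem mengerKernel_mul_mul {a : ℝ} (ha : a ≠ 0) (v w : ℝ) :
    mengerKernel p q (a * v) (a * w) = |a| ^ (2 * q - 3 * p) * mengerKernel p q v w := by
  have ha₀ : 0 < |a| := abs_pos.2 ha
  have hnum : |a| * |v| * (|a| * |w|) = |a| ^ (2 : ℝ) * (|v| * |w|) := by norm_cast; ring
  have hden : |a| * max |v| |w| * (|a| * |v|) * (|a| * |w|) =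
      |a| ^ (3 : ℝ) * (max |v| |w| * |v| * |w|) := by norm_cast; ring
  rw [mengerKernel, mengerKernel, abs_mul, abs_mul, ← mul_max_of_nonneg _ _ ha₀.le, hnum, hden,
    Real.mul_rpow (y := |v| * |w|) (by positivity) (by positivity),
    Real.mul_rpow (y := max |v| |w| * |v| * |w|) (by positivity) (by positivity),
    ← Real.rpow_mul ha₀.le, ← Real.rpow_mul ha₀.le, Real.rpow_sub ha₀, mul_div_mul_comm]

theorem lintegral_mengerKernel {v : ℝ} (hv : v ≠ 0) :
    ∫⁻ w, ENNReal.ofReal (mengerKernel p q v w) =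
      ENNReal.ofReal (|v| ^ (2 * q - 3 * p + 1)) * kernelMass p q := by
  have hv₀ : 0 < |v| := abs_pos.2 hv
  have hscale : ∀ w, ENNReal.ofReal (mengerKernel p q v w) =
      ENNReal.ofReal (|v| ^ (2 * q - 3 * p)) *
        ENNReal.ofReal (mengerKernel p q 1 (v⁻¹ * w)) := fun w => by
    rw [← ENNReal.ofReal_mul (by positivity), ← mengerKernel_mul_mul hv, mul_one,
      mul_inv_cancel_left₀ hv]
  simp_rw [hscale]
  rw [lintegral_const_mul' _ _ ENNReal.ofReal_ne_top,
    lintegral_comp_mul_left (fun w => ENNReal.ofReal (mengerKernel p q 1 w)) (inv_ne_zero hv),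
    inv_inv, ← mul_assoc, ← ENNReal.ofReal_mul (by positivity), Real.rpow_add_one hv₀.ne',
    kernelMass]

theorem kernelMass_lt_top (hzero : -1 < q - p) (hinfty : q - 2 * p < -1) :
    kernelMass p q < ⊤ := by
  have hIoc : IntegrableOn (fun r : ℝ => r ^ q / (max 1 r * r) ^ p) (Ioc 0 1) := by
    refine ((intervalIntegrable_iff_integrableOn_Ioc_of_le zero_le_one).1
      (intervalIntegral.intervalIntegrable_rpow' hzero)).congr_fun (fun r hr => ?_)
      measurableSet_Ioc
    simp only [max_eq_left hr.2, one_mul, Real.rpow_sub hr.1]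
  have hIoi : IntegrableOn (fun r : ℝ => r ^ q / (max 1 r * r) ^ p) (Ioi 1) := by
    refine (integrableOn_Ioi_rpow_of_lt hinfty one_pos).congr_fun (fun r hr => ?_)
      measurableSet_Ioi
    have hr₁ : 1 < r := hr
    have hr₀ : 0 < r := one_pos.trans hr₁
    simp only [max_eq_right hr₁.le, Real.rpow_sub hr₀, two_mul, Real.rpow_add hr₀,
      Real.mul_rpow hr₀.le hr₀.le]
  have hradial : Integrable fun w : ℝ => ‖w‖ ^ q / (max 1 ‖w‖ * ‖w‖) ^ p := by
    rw [integrable_fun_norm_addHaar volume (f := fun r : ℝ => r ^ q / (max 1 r * r) ^ p),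
      ← Ioc_union_Ioi_eq_Ioi (zero_le_one' ℝ)]
    simpa using hIoc.union hIoi
  simpa [kernelMass, mengerKernel] using hradial.lintegral_lt_top

theorem setLIntegral_mul_mengerKernel_le {g : ℝ → ℝ} (hg : Measurable g) (s : Set ℝ) :
    ∫⁻ v in s, ∫⁻ w in s, ENNReal.ofReal (g v) * ENNReal.ofReal (mengerKernel p q v w) ≤
      kernelMass p q * ∫⁻ v in s, ENNReal.ofReal (g v / |v| ^ (3 * p - 2 * q - 1)) := by
  have hinner : ∀ v, v ≠ 0 →
      ∫⁻ w in s, ENNReal.ofReal (g v) * ENNReal.ofReal (mengerKernel p q v w) ≤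
        kernelMass p q * ENNReal.ofReal (g v / |v| ^ (3 * p - 2 * q - 1)) := fun v hv =>
    calc ∫⁻ w in s, ENNReal.ofReal (g v) * ENNReal.ofReal (mengerKernel p q v w)
        ≤ ENNReal.ofReal (g v) * ∫⁻ w, ENNReal.ofReal (mengerKernel p q v w) := by
          rw [lintegral_const_mul' _ _ ENNReal.ofReal_ne_top]
          gcongr
          exact Measure.restrict_le_self
      _ = kernelMass p q * ENNReal.ofReal (g v / |v| ^ (3 * p - 2 * q - 1)) := by
          rw [lintegral_mengerKernel hv, ← mul_assoc, ← ENNReal.ofReal_mul' (by positivity),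
            mul_comm, show 2 * q - 3 * p + 1 = -(3 * p - 2 * q - 1) by ring,
            Real.rpow_neg (abs_nonneg v), div_eq_mul_inv]
  rw [← lintegral_const_mul _ (by fun_prop)]
  exact lintegral_mono_ae
    ((ae_restrict_of_ae (Measure.ae_ne volume (0 : ℝ))).mono hinner)

variable {n : ℕ}

theorem invR_le_mul_mengerKernel {v w L D : ℝ} {x y z : EuclideanSpace ℝ (Fin n)} (hp : 0 ≤ p)
    (hq : 0 < q) (hwedge : wedgeNorm (y - x) (z - x) ≤ |v| * |w| * D)
    (hxy : |v| ≤ L * ‖y - x‖) (hxz : |w| ≤ L * ‖z - x‖) (hyz : max |v| |w| ≤ L * ‖y - z‖) :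
    invR p q x y z ≤ (L ^ 3) ^ p * D ^ q * mengerKernel p q v w := by
  have hwedge₀ : 0 ≤ wedgeNorm (y - x) (z - x) := Real.sqrt_nonneg _
  rcases (by positivity : 0 ≤ |v| * |w|).eq_or_lt with hvw | hvw
  · rw [← hvw, zero_mul] at hwedge
    rw [invR, mengerKernel, ← hvw, hwedge.antisymm hwedge₀, Real.zero_rpow hq.ne']
    simp
  have hside : 0 < max |v| |w| * |v| * |w| := by
    rw [mul_assoc]
    exact mul_pos ((pos_of_mul_pos_left hvw (abs_nonneg w)).trans_le (le_max_left _ _)) hvw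
  have hD : 0 ≤ D := nonneg_of_mul_nonneg_right (hwedge₀.trans hwedge) hvw
  have hsides : max |v| |w| * |v| * |w| ≤ L ^ 3 * (‖y - z‖ * ‖y - x‖ * ‖z - x‖) :=
    calc max |v| |w| * |v| * |w|
        ≤ (L * ‖y - z‖) * (L * ‖y - x‖) * (L * ‖z - x‖) := by
          have hyz₀ := (abs_nonneg v).trans ((le_max_left _ _).trans hyz)
          have hxy₀ := (abs_nonneg v).trans hxy
          gcongr
      _ = L ^ 3 * (‖y - z‖ * ‖y - x‖ * ‖z - x‖) := by ring
  have hL : 0 < L ^ 3 := pos_of_mul_pos_left (hside.trans_le hsides) (by positivity)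
  have htriangle : 0 < ‖y - z‖ * ‖y - x‖ * ‖z - x‖ :=
    pos_of_mul_pos_right (hside.trans_le hsides) hL.le
  have hnum : wedgeNorm (y - x) (z - x) ^ q ≤ (|v| * |w|) ^ q * D ^ q := by
    rw [← Real.mul_rpow hvw.le hD]
    exact Real.rpow_le_rpow hwedge₀ hwedge hq.le
  have hden : (max |v| |w| * |v| * |w|) ^ p ≤
      (L ^ 3) ^ p * (‖y - z‖ * ‖y - x‖ * ‖z - x‖) ^ p := by
    rw [← Real.mul_rpow hL.le htriangle.le]
    exact Real.rpow_le_rpow hside.le hsides hp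
  calc invR p q x y z
      ≤ (|v| * |w|) ^ q * D ^ q / ((max |v| |w| * |v| * |w|) ^ p / (L ^ 3) ^ p) := by
        unfold invR
        gcongr
        exact (div_le_iff₀' (by positivity)).2 hden
    _ = (L ^ 3) ^ p * D ^ q * mengerKernel p q v w := by
        rw [mengerKernel]
        field_simp

end Kernel

section Circle

theorem circleDist_eq_dist (u v : ℝ) :
    circleDist u v = dist (u : UnitAddCircle) (v : UnitAddCircle) := by
  have hbdd : BddBelow (range fun k : ℤ => |u - v - k|) :=
    ⟨0, forall_mem_range.2 fun _ => abs_nonneg _⟩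
  rw [dist_eq_norm, ← AddCircle.coe_sub, UnitAddCircle.norm_eq, circleDist]
  exact (ciInf_le hbdd (round (u - v))).antisymm (le_ciInf (round_le (u - v)))

theorem dist_coe_add_left (u : ℝ) {v : ℝ} (hv : v ∈ Icc (-(1 / 2) : ℝ) (1 / 2)) :
    dist (u : UnitAddCircle) ((u + v : ℝ) : UnitAddCircle) = |v| := by
  rw [dist_comm, dist_eq_norm, ← AddCircle.coe_sub, add_sub_cancel_left,
    AddCircle.norm_coe_eq_abs_iff 1 one_ne_zero, abs_one]
  exact abs_le.2 hv

theorem setLIntegral_Ico_eq_of_periodic {f : ℝ → ℝ≥0∞} (hf : Function.Periodic f 1) (u : ℝ) :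
    ∫⁻ x in Ico (0 : ℝ) 1, f x = ∫⁻ v in Icc (-(1 / 2) : ℝ) (1 / 2), f (u + v) := by
  have hIoc : ∀ (g : UnitAddCircle → ℝ≥0∞) (a : ℝ),
      ∫⁻ x in Ioc a (a + 1), g x = ∫⁻ x : UnitAddCircle, g x := fun g a =>
    UnitAddCircle.lintegral_preimage a g
  calc ∫⁻ x in Ico (0 : ℝ) 1, f x
      = ∫⁻ x in Ioc (0 : ℝ) (0 + 1), hf.lift x := by
        rw [zero_add, setLIntegral_congr Ico_ae_eq_Ioc]
        rfl
    _ = ∫⁻ x : UnitAddCircle, hf.lift (u + x) := by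
        rw [hIoc, lintegral_add_left_eq_self]
    _ = ∫⁻ v in Icc (-(1 / 2) : ℝ) (1 / 2), f (u + v) := by
        rw [← hIoc _ (-(1 / 2)), show (-(1 / 2) + 1 : ℝ) = 1 / 2 by norm_num,
          setLIntegral_congr Ioc_ae_eq_Icc]
        rfl

theorem setLIntegral_Ico_Ico_eq_of_periodic {f : ℝ → ℝ → ℝ≥0∞} (hf : Function.Periodic f 1)
    (hf' : ∀ y, Function.Periodic (f y) 1) (u : ℝ) :
    ∫⁻ y in Ico (0 : ℝ) 1, ∫⁻ z in Ico (0 : ℝ) 1, f y z =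
      ∫⁻ v in Icc (-(1 / 2) : ℝ) (1 / 2), ∫⁻ w in Icc (-(1 / 2) : ℝ) (1 / 2),
        f (u + v) (u + w) := by
  rw [setLIntegral_Ico_eq_of_periodic (fun y => by rw [hf y]) u]
  exact lintegral_congr fun v => setLIntegral_Ico_eq_of_periodic (hf' _) u

end Circle

section Curves

theorem intervalIntegrable_of_ae_norm_le {E : Type*} [NormedAddCommGroup E] {f : ℝ → E} {M : ℝ}
    (hf : AEStronglyMeasurable f) (hM : ∀ᵐ x, ‖f x‖ ≤ M) (a b : ℝ) :
    IntervalIntegrable f volume a b :=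
  (intervalIntegrable_const (c := M)).mono_fun' hf.restrict (ae_restrict_of_ae hM)

theorem add_rpow_le_two_rpow_mul_add {a b q : ℝ} (ha : 0 ≤ a) (hb : 0 ≤ b) (hq : 1 ≤ q) :
    (a + b) ^ q ≤ 2 ^ (q - 1) * (a ^ q + b ^ q) := by
  lift a to NNReal using ha
  lift b to NNReal using hb
  exact_mod_cast NNReal.rpow_add_le_mul_rpow_add_rpow a b hq

variable {n : ℕ} {p q L M : ℝ} {γ γ' : ℝ → EuclideanSpace ℝ (Fin n)}

theorem CurvePair.intervalIntegrable (hγ : CurvePair γ γ') (hM : ∀ᵐ u, ‖γ' u‖ ≤ M) (a b : ℝ) :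
    IntervalIntegrable γ' volume a b :=
  intervalIntegrable_of_ae_norm_le hγ.meas'.aestronglyMeasurable hM a b

theorem CurvePair.measurable (hγ : CurvePair γ γ') (hM : ∀ᵐ u, ‖γ' u‖ ≤ M) : Measurable γ := by
  rw [funext hγ.primitive]
  exact (continuous_const.add
    (intervalIntegral.continuous_primitive (hγ.intervalIntegrable hM) 0)).measurable

theorem CurvePair.sub_eq_smul_intervalAverage (hγ : CurvePair γ γ') (hM : ∀ᵐ u, ‖γ' u‖ ≤ M)
    (u v : ℝ) : γ (u + v) - γ u = v • ⨍ t in u..u + v, γ' t := by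
  have hint := hγ.intervalIntegrable hM
  rw [hγ.primitive (u + v), hγ.primitive u, add_sub_add_left_eq_sub,
    intervalIntegral.integral_interval_sub_left (hint _ _) (hint _ _),
    ← sub_smul_intervalAverage, add_sub_cancel_left]

theorem CurvePair.wedgeNorm_sub_sub_le (hγ : CurvePair γ γ') (hM : ∀ᵐ u, ‖γ' u‖ ≤ M)
    (u v w : ℝ) :
    wedgeNorm (γ (u + v) - γ u) (γ (u + w) - γ u) ≤ |v| * |w| *
      ((‖(⨍ t in u..u + v, γ' t) - γ' u‖ + ‖(⨍ t in u..u + w, γ' t) - γ' u‖) * M) := by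
  rw [hγ.sub_eq_smul_intervalAverage hM, hγ.sub_eq_smul_intervalAverage hM]
  refine (wedgeNorm_smul_smul_le _ _ _ _).trans ?_
  gcongr
  · exact (norm_sub_le_norm_sub_add_norm_sub _ (γ' u) _).trans_eq
      (congrArg _ (norm_sub_rev _ _))
  · exact norm_intervalAverage_le hM _ _

/-- The part of the Menger integrand carried by the triples `(x, y, z)` for which the side
opposite to the vertex `x` is the longest, lengths being measured on `ℝ/ℤ`. -/
def vertexIntegrand (p q : ℝ) (γ : ℝ → EuclideanSpace ℝ (Fin n)) (a : ℝ × ℝ × ℝ) : ℝ≥0∞ :=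
  {a : ℝ × ℝ × ℝ | max (dist (a.1 : UnitAddCircle) a.2.1) (dist (a.1 : UnitAddCircle) a.2.2) ≤
      dist (a.2.1 : UnitAddCircle) a.2.2}.indicator
    (fun a => ENNReal.ofReal (invR p q (γ a.1) (γ a.2.1) (γ a.2.2))) a

theorem measurable_vertexIntegrand (p q : ℝ) (hγ : Measurable γ) :
    Measurable (vertexIntegrand p q γ) := by
  have : Measurable fun u : ℝ => (u : UnitAddCircle) := AddCircle.measurable_mk'
  refine Measurable.indicator ?_ (measurableSet_le (by fun_prop) (by fun_prop))
  exact ((measurable_invR p q).comp (by fun_prop :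
    Measurable fun a : ℝ × ℝ × ℝ => (γ a.1, γ a.2.1, γ a.2.2))).ennreal_ofReal

theorem ofReal_invR_le_sum_vertexIntegrand (p q : ℝ) (γ : ℝ → EuclideanSpace ℝ (Fin n))
    (x y z : ℝ) :
    ENNReal.ofReal (invR p q (γ x) (γ y) (γ z)) ≤ vertexIntegrand p q γ (x, y, z) +
      vertexIntegrand p q γ (y, z, x) + vertexIntegrand p q γ (z, x, y) := by
  simp only [vertexIntegrand, indicator_apply, mem_ofPred_eq, invR_rotate p q (γ x) (γ y) (γ z),
    invR_rotate p q (γ y) (γ z) (γ x), dist_comm (y : UnitAddCircle) x,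
    dist_comm (z : UnitAddCircle) x, dist_comm (z : UnitAddCircle) y]
  generalize dist (x : UnitAddCircle) y = c, dist (x : UnitAddCircle) z = b,
    dist (y : UnitAddCircle) z = a
  have hlongest : max c b ≤ a ∨ max a c ≤ b ∨ max b a ≤ c := by grind
  rcases hlongest with h | h | h <;> rw [if_pos h]
  · rw [add_assoc]
    exact le_self_add
  · rw [add_right_comm]
    exact le_add_self
  · exact le_add_self

theorem CurvePair.vertexIntegrand_add_one_snd (hγ : CurvePair γ γ') (p q x y z : ℝ) :
    vertexIntegrand p q γ (x, y + 1, z) = vertexIntegrand p q γ (x, y, z) := by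
  simp only [vertexIntegrand, indicator_apply, mem_ofPred_eq, AddCircle.coe_add_period,
    hγ.periodic y]

theorem CurvePair.vertexIntegrand_add_one_thd (hγ : CurvePair γ γ') (p q x y z : ℝ) :
    vertexIntegrand p q γ (x, y, z + 1) = vertexIntegrand p q γ (x, y, z) := by
  simp only [vertexIntegrand, indicator_apply, mem_ofPred_eq, AddCircle.coe_add_period,
    hγ.periodic z]

theorem pos_of_circleDist_le (hL : ∀ u v, circleDist u v ≤ L * ‖γ u - γ v‖) : 0 < L := by
  have hhalf : circleDist 0 (1 / 2) = 1 / 2 := by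
    rw [circleDist_eq_dist, ← zero_add (1 / 2 : ℝ), dist_coe_add_left 0 (by norm_num), zero_add,
      abs_of_pos one_half_pos]
  exact pos_of_mul_pos_left ((one_half_pos.trans_eq hhalf.symm).trans_le (hL _ _))
    (norm_nonneg _)

theorem CurvePair.vertexIntegrand_le (hγ : CurvePair γ γ') (hM : ∀ᵐ u, ‖γ' u‖ ≤ M)
    (hL : ∀ u v, circleDist u v ≤ L * ‖γ u - γ v‖) (hp : 0 ≤ p) (hq : 1 ≤ q) (u : ℝ) {v w : ℝ}
    (hv : v ∈ Icc (-(1 / 2) : ℝ) (1 / 2)) (hw : w ∈ Icc (-(1 / 2) : ℝ) (1 / 2)) :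
    vertexIntegrand p q γ (u, u + v, u + w) ≤
      ENNReal.ofReal ((L ^ 3) ^ p * (M ^ q * 2 ^ (q - 1))) *
        ((ENNReal.ofReal (‖(⨍ t in u..u + v, γ' t) - γ' u‖ ^ q) +
          ENNReal.ofReal (‖(⨍ t in u..u + w, γ' t) - γ' u‖ ^ q)) *
        ENNReal.ofReal (mengerKernel p q v w)) := by
  obtain ⟨_, hu⟩ := hM.exists
  have hM₀ : 0 ≤ M := (norm_nonneg _).trans hu
  have hL₀ : 0 < L := pos_of_circleDist_le hL
  have hwedge := hγ.wedgeNorm_sub_sub_le hM u v w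
  set X := ‖(⨍ t in u..u + v, γ' t) - γ' u‖
  set Y := ‖(⨍ t in u..u + w, γ' t) - γ' u‖
  simp_rw [circleDist_eq_dist] at hL
  refine indicator_apply_le' (fun hlongest => ?_) fun _ => zero_le
  rw [mem_ofPred_eq, dist_coe_add_left u hv, dist_coe_add_left u hw] at hlongest
  have hxy : |v| ≤ L * ‖γ (u + v) - γ u‖ := by
    rw [← dist_coe_add_left u hv, norm_sub_rev]
    exact hL _ _
  have hxz : |w| ≤ L * ‖γ (u + w) - γ u‖ := by
    rw [← dist_coe_add_left u hw, norm_sub_rev]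
    exact hL _ _
  have hpow : ((X + Y) * M) ^ q ≤ 2 ^ (q - 1) * (X ^ q + Y ^ q) * M ^ q := by
    rw [Real.mul_rpow (by positivity) hM₀]
    gcongr
    exact add_rpow_le_two_rpow_mul_add (norm_nonneg _) (norm_nonneg _) hq
  have hkernel := mengerKernel_nonneg p q v w
  rw [← ENNReal.ofReal_add (by positivity) (by positivity), ← ENNReal.ofReal_mul (by positivity),
    ← ENNReal.ofReal_mul (by positivity)]
  refine ENNReal.ofReal_le_ofReal ?_
  calc invR p q (γ u) (γ (u + v)) (γ (u + w))
      ≤ (L ^ 3) ^ p * ((X + Y) * M) ^ q * mengerKernel p q v w :=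
        invR_le_mul_mengerKernel hp (by linarith) hwedge hxy hxz (hlongest.trans (hL _ _))
    _ ≤ (L ^ 3) ^ p * (2 ^ (q - 1) * (X ^ q + Y ^ q) * M ^ q) * mengerKernel p q v w := by gcongr
    _ = _ := by ring

theorem CurvePair.lintegral_vertexIntegrand_le (hγ : CurvePair γ γ')
    (hM : ∀ᵐ u, ‖γ' u‖ ≤ M) (hL : ∀ u v, circleDist u v ≤ L * ‖γ u - γ v‖) (hq : 1 ≤ q)
    (hp : 2 / 3 * (q + 1) ≤ p) (u : ℝ) :
    ∫⁻ y in Ico (0 : ℝ) 1, ∫⁻ z in Ico (0 : ℝ) 1, vertexIntegrand p q γ (u, y, z) ≤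
      ENNReal.ofReal ((L ^ 3) ^ p * (M ^ q * 2 ^ (q - 1))) * (2 * kernelMass p q) *
        ∫⁻ w in Icc (-(1 / 2) : ℝ) (1 / 2),
          ENNReal.ofReal (‖γ' (u + w) - γ' u‖ ^ q / |w| ^ (3 * p - 2 * q - 1)) := by
  set X : ℝ → ℝ := fun v => ‖(⨍ t in u..u + v, γ' t) - γ' u‖ ^ q
  set c : ℝ≥0∞ := ENNReal.ofReal ((L ^ 3) ^ p * (M ^ q * 2 ^ (q - 1)))
  have hX : Measurable X :=
    ((measurable_intervalAverage (hγ.intervalIntegrable hM) u).sub_const _).norm.pow_const q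
  calc ∫⁻ y in Ico (0 : ℝ) 1, ∫⁻ z in Ico (0 : ℝ) 1, vertexIntegrand p q γ (u, y, z)
      = ∫⁻ v in Icc (-(1 / 2) : ℝ) (1 / 2), ∫⁻ w in Icc (-(1 / 2) : ℝ) (1 / 2),
          vertexIntegrand p q γ (u, u + v, u + w) :=
        setLIntegral_Ico_Ico_eq_of_periodic
          (f := fun y z => vertexIntegrand p q γ (u, y, z))
          (fun y => funext (hγ.vertexIntegrand_add_one_snd p q u y))
          (hγ.vertexIntegrand_add_one_thd p q u) u
    _ ≤ ∫⁻ v in Icc (-(1 / 2) : ℝ) (1 / 2), ∫⁻ w in Icc (-(1 / 2) : ℝ) (1 / 2),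
          c * ((ENNReal.ofReal (X v) + ENNReal.ofReal (X w)) *
            ENNReal.ofReal (mengerKernel p q v w)) :=
        setLIntegral_mono' measurableSet_Icc fun v hv =>
          setLIntegral_mono' measurableSet_Icc fun w hw =>
            hγ.vertexIntegrand_le hM hL (by linarith) hq u hv hw
    _ = c * (2 * ∫⁻ v in Icc (-(1 / 2) : ℝ) (1 / 2), ∫⁻ w in Icc (-(1 / 2) : ℝ) (1 / 2),
          ENNReal.ofReal (X v) * ENNReal.ofReal (mengerKernel p q v w)) := by
        simp_rw [lintegral_const_mul' c _ ENNReal.ofReal_ne_top]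
        rw [lintegral_lintegral_add_mul_of_symm hX.ennreal_ofReal (measurable_mengerKernel p q)
          fun v w => by rw [mengerKernel_comm]]
    _ ≤ c * (2 * (kernelMass p q * ∫⁻ w in Icc (-(1 / 2) : ℝ) (1 / 2),
          ENNReal.ofReal (‖γ' (u + w) - γ' u‖ ^ q / |w| ^ (3 * p - 2 * q - 1)))) := by
        gcongr
        refine (setLIntegral_mul_mengerKernel_le hX _).trans (mul_le_mul_right ?_ _)
        exact setLIntegral_intervalAverage_sub_le hγ.meas' (hγ.intervalIntegrable hM) hq
          (by linarith) (γ' u) u (1 / 2)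
    _ = _ := by simp only [mul_assoc]

theorem menger_le_lintegral_invR (hM : ∀ᵐ u, ‖γ' u‖ ≤ M) :
    menger p q γ γ' ≤ ENNReal.ofReal (M ^ 3) *
      ∫⁻ x in Ico (0 : ℝ) 1, ∫⁻ y in Ico (0 : ℝ) 1, ∫⁻ z in Ico (0 : ℝ) 1,
        ENNReal.ofReal (invR p q (γ x) (γ y) (γ z)) := by
  have hspeed : ∀ x y z, ‖γ' x‖ ≤ M → ‖γ' y‖ ≤ M → ‖γ' z‖ ≤ M →
      ENNReal.ofReal (‖γ' x‖ * ‖γ' y‖ * ‖γ' z‖ * invR p q (γ x) (γ y) (γ z)) ≤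
        ENNReal.ofReal (M ^ 3) * ENNReal.ofReal (invR p q (γ x) (γ y) (γ z)) :=
    fun x y z hx hy hz => by
      have hM₀ : 0 ≤ M := (norm_nonneg _).trans hx
      rw [ENNReal.ofReal_mul (by positivity), show M ^ 3 = M * M * M by ring]
      gcongr
  have hM' := ae_restrict_of_ae (s := Ico (0 : ℝ) 1) hM
  simp_rw [← lintegral_const_mul' _ _ (ENNReal.ofReal_ne_top (r := M ^ 3))]
  exact lintegral_mono_ae (hM'.mono fun x hx => lintegral_mono_ae (hM'.mono fun y hy =>
    lintegral_mono_ae (hM'.mono fun z hz => hspeed x y z hx hy hz)))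

theorem CurvePair.menger_le_sobSemiPow (hγ : CurvePair γ γ') (hM : ∀ᵐ u, ‖γ' u‖ ≤ M)
    (hL : ∀ u v, circleDist u v ≤ L * ‖γ u - γ v‖) (hq : 1 ≤ q)
    (hp : 2 / 3 * (q + 1) ≤ p) :
    menger p q γ γ' ≤ ENNReal.ofReal (M ^ 3) *
      (3 * (ENNReal.ofReal ((L ^ 3) ^ p * (M ^ q * 2 ^ (q - 1))) * (2 * kernelMass p q) *
        sobSemiPow ((3 * p - 2 * q - 2) / q) q γ')) := by
  have hexp : 1 + q * ((3 * p - 2 * q - 2) / q) = 3 * p - 2 * q - 1 := by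
    field_simp
    ring
  have hinner : Measurable fun x => ∫⁻ w in Icc (-(1 / 2) : ℝ) (1 / 2),
      ENNReal.ofReal (‖γ' (x + w) - γ' x‖ ^ q / |w| ^ (3 * p - 2 * q - 1)) := by
    have hm := hγ.meas'
    refine Measurable.lintegral_prod_right' (f := fun a : ℝ × ℝ =>
      ENNReal.ofReal (‖γ' (a.1 + a.2) - γ' a.1‖ ^ q / |a.2| ^ (3 * p - 2 * q - 1))) ?_
    fun_prop
  refine (menger_le_lintegral_invR hM).trans ?_
  gcongr
  calc ∫⁻ x in Ico (0 : ℝ) 1, ∫⁻ y in Ico (0 : ℝ) 1, ∫⁻ z in Ico (0 : ℝ) 1,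
        ENNReal.ofReal (invR p q (γ x) (γ y) (γ z))
      ≤ ∫⁻ x in Ico (0 : ℝ) 1, ∫⁻ y in Ico (0 : ℝ) 1, ∫⁻ z in Ico (0 : ℝ) 1,
          (vertexIntegrand p q γ (x, y, z) + vertexIntegrand p q γ (y, z, x) +
            vertexIntegrand p q γ (z, x, y)) := by
        refine lintegral_mono fun x => lintegral_mono fun y => lintegral_mono fun z => ?_
        exact ofReal_invR_le_sum_vertexIntegrand p q γ x y z
    _ = 3 * ∫⁻ x in Ico (0 : ℝ) 1, ∫⁻ y in Ico (0 : ℝ) 1, ∫⁻ z in Ico (0 : ℝ) 1,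
          vertexIntegrand p q γ (x, y, z) :=
        lintegral_sum_rotations (measurable_vertexIntegrand p q (hγ.measurable hM))
    _ ≤ _ := by
        rw [sobSemiPow, hexp]
        refine mul_le_mul_right ?_ 3
        rw [← lintegral_const_mul _ hinner]
        exact lintegral_mono fun x => hγ.lintegral_vertexIntegrand_le hM hL hq hp x

theorem sobSemiPow_le_ofReal_sobNorm_rpow {s ρ : ℝ} {f f' : ℝ → EuclideanSpace ℝ (Fin n)}
    (hρ : 0 < ρ) (hfin : sobSemiPow s ρ f' ≠ ⊤) :
    sobSemiPow s ρ f' ≤ ENNReal.ofReal (sobNorm s ρ f f' ^ ρ) := by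
  have hsemi : (sobSemiPow s ρ f').toReal ^ (1 / ρ) ≤ sobNorm s ρ f f' :=
    le_add_of_nonneg_left (by positivity)
  rw [← ENNReal.ofReal_toReal hfin]
  gcongr
  calc (sobSemiPow s ρ f').toReal = ((sobSemiPow s ρ f').toReal ^ (1 / ρ)) ^ ρ := by
        rw [one_div, Real.rpow_inv_rpow ENNReal.toReal_nonneg hρ.ne']
    _ ≤ sobNorm s ρ f f' ^ ρ := by gcongr

theorem menger_le_sobolev_norm_general (n : ℕ) (p q L M : ℝ) (hq : 1 ≤ q)
    (hp₁ : 2 / 3 * (q + 1) ≤ p) (hp₂ : p < q + 1) :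
    ∃ C : ℝ, 0 < C ∧ ∀ γ γ' : ℝ → EuclideanSpace ℝ (Fin n), CurvePair γ γ' →
      (∀ᵐ u, ‖γ' u‖ ≤ M) → (∀ u v, circleDist u v ≤ L * ‖γ u - γ v‖) →
      menger p q γ γ' ≤
        ENNReal.ofReal C * sobSemiPow ((3 * p - 2 * q - 2) / q) q γ' := by
  set K : ℝ≥0∞ := ENNReal.ofReal (M ^ 3) *
    (3 * (ENNReal.ofReal ((L ^ 3) ^ p * (M ^ q * 2 ^ (q - 1))) * (2 * kernelMass p q)))
  have hK : K ≠ ⊤ := by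
    have hmass := (kernelMass_lt_top (p := p) (q := q) (by linarith) (by linarith)).ne
    finiteness
  refine ⟨K.toReal + 1, by positivity, fun γ γ' hγ hM hL => ?_⟩
  calc menger p q γ γ' ≤ K * sobSemiPow ((3 * p - 2 * q - 2) / q) q γ' := by
        simpa only [K, mul_assoc] using hγ.menger_le_sobSemiPow hM hL hq hp₁
    _ ≤ ENNReal.ofReal (K.toReal + 1) * sobSemiPow ((3 * p - 2 * q - 2) / q) q γ' := by
        gcongr
        exact ENNReal.le_ofReal_iff_toReal_le hK (by positivity) |>.2 (by linarith)

end Curves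

/-- **Energy bound for Sobolev curves.** In the sub-critical range `q > 1`,
`(2/3)q + 1 < p < q + 2/3`, every injective, arc-length parametrized,
bi-Lipschitz (with constant `L`) curve `γ ∈ W^{(3p-2)/q-1,q}(ℝ/ℤ,ℝⁿ)`
satisfies `E_{p,q}(γ) ≤ C ‖γ‖^q` with `C = C(p,q,L)`. -/
theorem menger_le_sobolev_norm (n : ℕ) (p q L : ℝ)
    (hq : 1 < q) (hp₁ : 2/3 * q + 1 < p) (hp₂ : p < q + 2/3) :
    ∃ C : ℝ, 0 < C ∧
      ∀ γ γ' : ℝ → EuclideanSpace ℝ (Fin n),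
        CurvePair γ γ' → (∀ᵐ u : ℝ, ‖γ' u‖ = 1) → InjCircle γ →
        sobSemiPow ((3*p - 2*q - 2)/q) q γ' < ⊤ →
        (∀ u v : ℝ, circleDist u v ≤ L * ‖γ u - γ v‖) →
        menger p q γ γ' ≤
          ENNReal.ofReal (C * sobNorm ((3*p - 2*q - 2)/q) q γ γ' ^ q) := by
  obtain ⟨C, hC, hbound⟩ :=
    menger_le_sobolev_norm_general n p q L 1 hq.le (by linarith) (by linarith)
  refine ⟨C, hC, fun γ γ' hγ harc _ hfin hL =>
    (hbound γ γ' hγ (harc.mono fun _ => le_of_eq) hL).trans ?_⟩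
  rw [ENNReal.ofReal_mul hC.le]
  gcongr
  exact sobSemiPow_le_ofReal_sobNorm_rpow (one_pos.trans hq) hfin.ne
end
end

section
/- Assume the sub-critical range q > 1 and (2/3)q + 1 < p < q + 2/3, and set α := 3(p−1)/q − 2, which lies in (0,1). There is a constant C depending only on p and q such that every injective, arc-length parametrized curve γ ∈ C¹(ℝ/ℤ,ℝⁿ) with E_{p,q}(γ) < ∞ satisfies sup_{u ∈ ℝ/ℤ} |γ'(u+w) − γ'(u)| ≤ C E_{p,q}(γ)^{1/q} |w|^α for all w ∈ [−1/2, 1/2]. -/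
open MeasureTheory Set Filter Topology
open scoped ENNReal

noncomputable section

/-!
On a nearly straight arc, three points at mutual distances comparable to `r` satisfy
`|secant x y - secant y z| ≲ |(y - x) ∧ (z - x)| / r ^ 2`. Averaging this over three arcs of length
comparable to `r`, Jensen's inequality bounds the mean turning of the secants by a multiple of
`r ^ α * E ^ (1 / q)`. Secants between arcs that shrink geometrically towards a point converge to
the tangent there; summing the geometric series at both ends of an arc, and comparing the largest
secants, bounds the difference of the two end tangents. Near straightness comes for free: a
continuous induction along the curve shows that an arc of length `r` and energy `E` remains nearly
straight as long as `r ^ α * E ^ (1 / q)` is small, and otherwise the estimate is trivial.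
-/

open NormedSpace ProbabilityTheory

section UnitVectors

variable {V : Type*} [NormedAddCommGroup V]

lemma norm_normalize_sub_le_two_mul [NormedSpace ℝ V] {v e : V} (he : ‖e‖ = 1) :
    ‖normalize v - e‖ ≤ 2 * ‖v - e‖ := by
  have hdiff : |1 - ‖v‖| ≤ ‖v - e‖ := by
    rw [← he, norm_sub_rev v e]
    exact abs_norm_sub_norm_le e v
  rcases eq_or_ne v 0 with rfl | hv
  · simp [normalize_zero_eq_zero, he]
  have hself : ‖normalize v - v‖ = |1 - ‖v‖| := by
    nth_rw 2 [← norm_smul_normalize v]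
    rw [← one_smul ℝ (normalize v), smul_smul, mul_one, ← sub_smul, norm_smul, norm_normalize hv,
      mul_one, Real.norm_eq_abs]
  linarith [norm_sub_le_norm_sub_add_norm_sub (normalize v) v e]

lemma three_quarters_le_norm_of_norm_sub_le {v e : V} (he : ‖e‖ = 1)
    (hv : ‖v - e‖ ≤ 1 / 4) : 3 / 4 ≤ ‖v‖ := by
  linarith [norm_sub_norm_le e v, norm_sub_rev e v]

lemma inner_nonneg_of_norm_sub_le [InnerProductSpace ℝ V] {v w e : V} (he : ‖e‖ = 1)
    (hv : ‖v - e‖ ≤ 1 / 4) (hw : ‖w - e‖ ≤ 1 / 4) :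
    0 ≤ inner ℝ v w := by
  have hv' := three_quarters_le_norm_of_norm_sub_le he hv
  have hw' := three_quarters_le_norm_of_norm_sub_le he hw
  have hvw : ‖v - w‖ ≤ 1 / 2 := by
    linarith [norm_sub_le_norm_sub_add_norm_sub v e w, norm_sub_rev e w]
  rw [real_inner_eq_norm_mul_self_add_norm_mul_self_sub_norm_sub_mul_self_div_two]
  nlinarith [norm_nonneg (v - w)]

end UnitVectors

section Wedge

variable {n : ℕ} (a b : EuclideanSpace ℝ (Fin n))

lemma wedgeNorm_nonneg : 0 ≤ wedgeNorm a b :=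
  Real.sqrt_nonneg _

lemma wedgeNorm_sq : wedgeNorm a b ^ 2 = (‖a‖ * ‖b‖) ^ 2 - inner ℝ a b ^ 2 := by
  rw [wedgeNorm, Real.sq_sqrt, mul_pow]
  rw [← mul_pow, sub_nonneg, sq_le_sq, abs_of_nonneg (by positivity : 0 ≤ ‖a‖ * ‖b‖)]
  exact abs_real_inner_le_norm a b

lemma wedgeNorm_add_right : wedgeNorm a (a + b) = wedgeNorm a b := by
  rw [wedgeNorm, wedgeNorm, inner_add_right, norm_add_sq_real, real_inner_self_eq_norm_sq]
  ring_nf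

lemma wedgeNorm_smul_smul (s t : ℝ) : wedgeNorm (s • a) (t • b) = |s| * |t| * wedgeNorm a b := by
  rw [← sq_eq_sq₀ (wedgeNorm_nonneg _ _) (mul_nonneg (by positivity) (wedgeNorm_nonneg _ _)),
    mul_pow, wedgeNorm_sq, wedgeNorm_sq, norm_smul, norm_smul, real_inner_smul_left,
    real_inner_smul_right, Real.norm_eq_abs, Real.norm_eq_abs]
  simp only [mul_pow, sq_abs]
  ring

variable {a b} in
/-- For an angle `θ ∈ [0, π/2]` this is `2 * sin (θ / 2) ≤ 2 * sin θ`. -/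
lemma norm_normalize_sub_normalize_mul_le (hab : 0 ≤ inner ℝ a b) :
    ‖normalize a - normalize b‖ * (‖a‖ * ‖b‖) ≤ 2 * wedgeNorm a b := by
  rcases eq_or_ne a 0 with rfl | ha
  · simp [wedgeNorm_nonneg]
  rcases eq_or_ne b 0 with rfl | hb
  · simp [wedgeNorm_nonneg]
  have hsq : (‖normalize a - normalize b‖ * (‖a‖ * ‖b‖)) ^ 2
      = 2 * (‖a‖ * ‖b‖) ^ 2 - 2 * (‖a‖ * ‖b‖) * inner ℝ a b := by
    have hinner : inner ℝ a b = ‖a‖ * ‖b‖ * inner ℝ (normalize a) (normalize b) := by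
      nth_rw 1 [← norm_smul_normalize a, ← norm_smul_normalize b]
      rw [real_inner_smul_left, real_inner_smul_right, mul_assoc]
    rw [mul_pow, norm_sub_sq_real, norm_normalize ha, norm_normalize hb, hinner]
    ring
  refine le_of_sq_le_sq ?_ (mul_nonneg two_pos.le (wedgeNorm_nonneg a b))
  rw [hsq, mul_pow 2, wedgeNorm_sq]
  nlinarith [real_inner_le_norm a b]

end Wedge

section Secants

variable {V : Type*} [NormedAddCommGroup V] [NormedSpace ℝ V]

/-- The unit secant vector of `γ` through `γ x` and `γ y`. It is oriented by the parameter and not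
by the order of the arguments, so that it approximates the tangent from both sides. -/
def secant (γ : ℝ → V) (x y : ℝ) : V :=
  normalize (slope γ x y)

lemma secant_comm (γ : ℝ → V) (x y : ℝ) : secant γ x y = secant γ y x := by
  rw [secant, secant, slope_comm]

lemma stronglyMeasurable_secant {γ : ℝ → V} (hγ : Continuous γ) :
    StronglyMeasurable (Function.uncurry (secant γ)) := by
  have hslope : StronglyMeasurable fun z : ℝ × ℝ => slope γ z.1 z.2 := by
    have hdiff : Continuous fun z : ℝ × ℝ => γ z.2 - γ z.1 := by fun_prop
    have hinv : Measurable fun z : ℝ × ℝ => (z.2 - z.1)⁻¹ := by fun_prop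
    exact hinv.stronglyMeasurable.smul hdiff.stronglyMeasurable
  exact hslope.norm.measurable.inv.stronglyMeasurable.smul hslope

lemma norm_slope_sub_le {γ : ℝ → V} (hγ : Differentiable ℝ γ) {s : Set ℝ} (hs : Convex ℝ s)
    {e : V} {C : ℝ} (he : ∀ t ∈ s, ‖deriv γ t - e‖ ≤ C) {x y : ℝ} (hx : x ∈ s) (hy : y ∈ s)
    (hxy : x ≠ y) : ‖slope γ x y - e‖ ≤ C := by
  have hderiv : ∀ t ∈ s, HasDerivWithinAt (fun t => γ t - t • e) (deriv γ t - e) s t := by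
    intro t _
    simpa using! ((hγ t).hasDerivAt.sub ((hasDerivAt_id t).smul_const e)).hasDerivWithinAt
  have hchord := hs.norm_image_sub_le_of_norm_hasDerivWithin_le hderiv he hx hy
  have hsplit : γ y - y • e - (γ x - x • e) = (y - x) • (slope γ x y - e) := by
    rw [smul_sub, sub_smul_slope, vsub_eq_sub, sub_smul]
    abel
  rw [hsplit, norm_smul, mul_comm] at hchord
  exact le_of_mul_le_mul_right hchord (norm_pos_iff.2 (sub_ne_zero.2 hxy.symm))

lemma exists_forall_mem_ball_norm_secant_sub_deriv_le {γ : ℝ → V} (hγ : ContDiff ℝ 1 γ) {c : ℝ}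
    (hc : ‖deriv γ c‖ = 1) {ε : ℝ} (hε : 0 < ε) :
    ∃ δ > 0, ∀ x ∈ Metric.ball c δ, ∀ y ∈ Metric.ball c δ, x ≠ y →
      ‖secant γ x y - deriv γ c‖ ≤ ε := by
  obtain ⟨δ, hδ, hball⟩ :=
    Metric.continuous_iff.1 (hγ.continuous_deriv le_rfl) c (ε / 2) (half_pos hε)
  refine ⟨δ, hδ, fun x hx y hy hxy => ?_⟩
  have hslope : ‖slope γ x y - deriv γ c‖ ≤ ε / 2 :=
    norm_slope_sub_le (hγ.differentiable one_ne_zero) (convex_ball c δ)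
      (fun t ht => (dist_eq_norm _ _).symm.trans_le (hball t ht).le) hx hy hxy
  calc ‖secant γ x y - deriv γ c‖ ≤ 2 * ‖slope γ x y - deriv γ c‖ :=
        norm_normalize_sub_le_two_mul hc
    _ ≤ ε := by linarith

end Secants

section NearlyStraight

/-- `γ` is nearly straight on `s` if all its difference quotients over `s` lie within `1 / 4` of
one unit vector. -/
def NearlyStraightOn {V : Type*} [NormedAddCommGroup V] [NormedSpace ℝ V] (γ : ℝ → V)
    (s : Set ℝ) : Prop :=
  ∃ e : V, ‖e‖ = 1 ∧ ∀ x ∈ s, ∀ y ∈ s, x ≠ y → ‖slope γ x y - e‖ ≤ 1 / 4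

lemma nearlyStraightOn_of_norm_deriv_sub_le {V : Type*} [NormedAddCommGroup V] [NormedSpace ℝ V]
    {γ : ℝ → V} (hγ : Differentiable ℝ γ) {s : Set ℝ} (hs : Convex ℝ s) {e : V} (he : ‖e‖ = 1)
    (hderiv : ∀ t ∈ s, ‖deriv γ t - e‖ ≤ 1 / 4) : NearlyStraightOn γ s :=
  ⟨e, he, fun _ hx _ hy => norm_slope_sub_le hγ hs hderiv hx hy⟩

lemma NearlyStraightOn.injOn {V : Type*} [NormedAddCommGroup V] [NormedSpace ℝ V] {γ : ℝ → V}
    {s : Set ℝ} (hs : NearlyStraightOn γ s) : InjOn γ s := by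
  obtain ⟨e, he, hslope⟩ := hs
  intro x hx y hy hxy
  by_contra hne
  have := hslope x hx y hy hne
  norm_num [slope_def_module, hxy, he] at this

variable {n : ℕ} {γ : ℝ → EuclideanSpace ℝ (Fin n)} {s : Set ℝ} {x y z c p q r : ℝ}

lemma NearlyStraightOn.norm_secant_sub_secant_mul_le (hs : NearlyStraightOn γ s)
    (hx : x ∈ s) (hy : y ∈ s) (hz : z ∈ s) (hxy : x ≠ y) (hyz : y ≠ z) :
    ‖secant γ x y - secant γ y z‖ * (|x - y| * |y - z|)
      ≤ 4 * wedgeNorm (γ y - γ x) (γ z - γ x) := by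
  obtain ⟨e, he, hslope⟩ := hs
  set v := slope γ x y
  set w := slope γ y z
  have hv : ‖v - e‖ ≤ 1 / 4 := hslope x hx y hy hxy
  have hw : ‖w - e‖ ≤ 1 / 4 := hslope y hy z hz hyz
  have hwedge : wedgeNorm (γ y - γ x) (γ z - γ x) = |x - y| * |y - z| * wedgeNorm v w := by
    have hsum : γ z - γ x = (y - x) • v + (z - y) • w := by
      simp only [v, w, sub_smul_slope, vsub_eq_sub]
      abel
    rw [hsum, ← vsub_eq_sub (γ y), ← sub_smul_slope, wedgeNorm_add_right, wedgeNorm_smul_smul,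
      abs_sub_comm y, abs_sub_comm z]
  have hangle : ‖secant γ x y - secant γ y z‖ * (‖v‖ * ‖w‖) ≤ 2 * wedgeNorm v w :=
    norm_normalize_sub_normalize_mul_le (inner_nonneg_of_norm_sub_le he hv hw)
  have hlen : 1 / 2 ≤ ‖v‖ * ‖w‖ := by
    nlinarith [three_quarters_le_norm_of_norm_sub_le he hv,
      three_quarters_le_norm_of_norm_sub_le he hw]
  have hturn : ‖secant γ x y - secant γ y z‖ ≤ 4 * wedgeNorm v w := by
    nlinarith [norm_nonneg (secant γ x y - secant γ y z)]
  rw [hwedge]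
  nlinarith [mul_nonneg (abs_nonneg (x - y)) (abs_nonneg (y - z))]

lemma wedgeNorm_rpow_div_le_invR {x y z : EuclideanSpace ℝ (Fin n)} (hp : 0 ≤ p)
    (hxy : x ≠ y) (hyz : y ≠ z) (hxz : x ≠ z) (hxy' : ‖x - y‖ ≤ r) (hyz' : ‖y - z‖ ≤ r)
    (hxz' : ‖x - z‖ ≤ r) : wedgeNorm (y - x) (z - x) ^ q / (r ^ 3) ^ p ≤ invR p q x y z := by
  have hr : 0 ≤ r := (norm_nonneg _).trans hxy'
  rw [← sub_ne_zero, ← norm_pos_iff] at hxy hyz hxz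
  rw [invR, norm_sub_rev y x, norm_sub_rev z x]
  have hprod : ‖y - z‖ * ‖x - y‖ * ‖x - z‖ ≤ r ^ 3 := by
    calc ‖y - z‖ * ‖x - y‖ * ‖x - z‖ ≤ r * r * r := by gcongr
      _ = r ^ 3 := by ring
  have := wedgeNorm_nonneg (y - x) (z - x)
  gcongr

lemma NearlyStraightOn.norm_secant_sub_secant_rpow_le (hs : NearlyStraightOn γ s)
    (hγ : LipschitzWith 1 γ) (hp : 0 ≤ p) (hq : 0 ≤ q) (hc : 0 < c) (hr : 0 < r)
    (hx : x ∈ s) (hy : y ∈ s) (hz : z ∈ s) (hxy : |x - y| ∈ Icc (c * r) r)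
    (hyz : |y - z| ∈ Icc (c * r) r) (hxz : |x - z| ∈ Icc (c * r) r) :
    ‖secant γ x y - secant γ y z‖ ^ q
      ≤ (4 / (c * r) ^ 2) ^ q * (r ^ 3) ^ p * invR p q (γ x) (γ y) (γ z) := by
  have hcr : 0 < c * r := mul_pos hc hr
  have hne : ∀ {u v : ℝ}, |u - v| ∈ Icc (c * r) r → u ≠ v := fun h =>
    sub_ne_zero.1 (abs_pos.1 (hcr.trans_le h.1))
  have hne' : ∀ {u v : ℝ}, u ∈ s → v ∈ s → |u - v| ∈ Icc (c * r) r → γ u ≠ γ v :=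
    fun hu hv h => hs.injOn.ne hu hv (hne h)
  have hle : ∀ {u v : ℝ}, |u - v| ∈ Icc (c * r) r → ‖γ u - γ v‖ ≤ r := fun {u v} h => by
    simpa [dist_eq_norm] using (hγ.dist_le_mul u v).trans (by simpa [Real.dist_eq] using h.2)
  set w := wedgeNorm (γ y - γ x) (γ z - γ x)
  have hw : 0 ≤ w := wedgeNorm_nonneg _ _
  have hturn : ‖secant γ x y - secant γ y z‖ ≤ 4 / (c * r) ^ 2 * w := by
    rw [div_mul_eq_mul_div, le_div_iff₀ (by positivity), sq]
    refine le_trans ?_ (hs.norm_secant_sub_secant_mul_le hx hy hz (hne hxy) (hne hyz))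
    gcongr
    exacts [hxy.1, hyz.1]
  calc ‖secant γ x y - secant γ y z‖ ^ q ≤ (4 / (c * r) ^ 2 * w) ^ q := by gcongr
    _ = (4 / (c * r) ^ 2) ^ q * (r ^ 3) ^ p * (w ^ q / (r ^ 3) ^ p) := by
      rw [Real.mul_rpow (by positivity) hw]
      field_simp
    _ ≤ _ := by
      gcongr
      exact wedgeNorm_rpow_div_le_invR hp (hne' hx hy hxy) (hne' hy hz hyz) (hne' hx hz hxz)
        (hle hxy) (hle hyz) (hle hxz)

end NearlyStraight

section Averages

lemma rpow_lintegral_le_lintegral_rpow {Ω : Type*} {mΩ : MeasurableSpace Ω} {μ : Measure Ω}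
    [IsZeroOrProbabilityMeasure μ] {q : ℝ} (hq : 1 ≤ q) (f : Ω → ℝ≥0∞) :
    (∫⁻ x, f x ∂μ) ^ q ≤ ∫⁻ x, f x ^ q ∂μ := by
  have hq0 : 0 < q := one_pos.trans_le hq
  rcases eq_zero_or_isProbabilityMeasure μ with rfl | _
  · simp [hq0]
  obtain ⟨g, hg, hgf, heq⟩ := exists_measurable_le_lintegral_eq μ f
  have hnorm : ∫⁻ x, g x ∂μ ≤ (∫⁻ x, g x ^ q ∂μ) ^ (1 / q) := by
    simpa [eLpNorm'] using
      eLpNorm'_le_eLpNorm'_of_exponent_le one_pos hq μ hg.aestronglyMeasurable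
  calc (∫⁻ x, f x ∂μ) ^ q ≤ ∫⁻ x, g x ^ q ∂μ := by
        rwa [heq, ← ENNReal.le_rpow_inv_iff hq0, ← one_div]
    _ ≤ ∫⁻ x, f x ^ q ∂μ := lintegral_mono fun x => ENNReal.rpow_le_rpow (hgf x) hq0.le

lemma rpow_lintegral_cond_le {Ω : Type*} {mΩ : MeasurableSpace Ω} {μ : Measure Ω} {q : ℝ}
    (hq : 1 ≤ q) {s t : Set Ω} (hs : MeasurableSet s) (hst : s ⊆ t) {m : ℝ≥0∞} (hm : m ≤ μ s)
    {f g : Ω → ℝ≥0∞} (hfg : ∀ x ∈ s, f x ^ q ≤ g x) :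
    (∫⁻ x, f x ∂μ[|s]) ^ q ≤ m⁻¹ * ∫⁻ x in t, g x ∂μ :=
  calc (∫⁻ x, f x ∂μ[|s]) ^ q ≤ ∫⁻ x, f x ^ q ∂μ[|s] := rpow_lintegral_le_lintegral_rpow hq f
    _ = (μ s)⁻¹ * ∫⁻ x in s, f x ^ q ∂μ := by
      rw [ProbabilityTheory.cond, lintegral_smul_measure, smul_eq_mul]
    _ ≤ m⁻¹ * ∫⁻ x in s, g x ∂μ := by
      gcongr ?_ * ?_
      · exact ENNReal.inv_le_inv.2 hm
      · exact setLIntegral_mono' hs hfg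
    _ ≤ m⁻¹ * ∫⁻ x in t, g x ∂μ := by gcongr

variable {V : Type*} [NormedAddCommGroup V] [NormedSpace ℝ V]

/-- The mean distance to `e` of the secants of `γ` between two independent random parameters. -/
def meanDeviation (γ : ℝ → V) (μ ν : Measure ℝ) (e : V) : ℝ≥0∞ :=
  ∫⁻ x, ∫⁻ y, ‖secant γ x y - e‖ₑ ∂ν ∂μ

/-- The mean change of the secant of `γ` along three independent random parameters. -/
def meanTurning (γ : ℝ → V) (μ ν κ : Measure ℝ) : ℝ≥0∞ :=
  ∫⁻ x, ∫⁻ y, ∫⁻ z, ‖secant γ x y - secant γ y z‖ₑ ∂κ ∂ν ∂μ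

variable {γ : ℝ → V} (μ ν κ : Measure ℝ)

lemma measurable_enorm_secant_sub (hγ : Continuous γ) (e : V) :
    Measurable (Function.uncurry fun x y => ‖secant γ x y - e‖ₑ) :=
  ((stronglyMeasurable_secant hγ).sub stronglyMeasurable_const).enorm

lemma meanDeviation_comm [SFinite μ] [SFinite ν] (hγ : Continuous γ) (e : V) :
    meanDeviation γ μ ν e = meanDeviation γ ν μ e := by
  unfold meanDeviation
  rw [lintegral_lintegral_swap (measurable_enorm_secant_sub hγ e).aemeasurable]
  simp only [secant_comm γ]

lemma meanDeviation_le_meanTurning_add [IsProbabilityMeasure μ] [IsProbabilityMeasure ν]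
    [IsProbabilityMeasure κ] (hγ : Continuous γ) (e : V) :
    meanDeviation γ μ ν e ≤ meanTurning γ μ ν κ + meanDeviation γ ν κ e := by
  have hmeas := measurable_enorm_secant_sub hγ e
  have htriangle : ∀ x y,
      ‖secant γ x y - e‖ₑ ≤ ∫⁻ z, ‖secant γ x y - secant γ y z‖ₑ + ‖secant γ y z - e‖ₑ ∂κ := by
    intro x y
    calc ‖secant γ x y - e‖ₑ = ∫⁻ _, ‖secant γ x y - e‖ₑ ∂κ := by simp
      _ ≤ _ := lintegral_mono fun z => by
        rw [← sub_add_sub_cancel _ (secant γ y z) e]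
        exact enorm_add_le _ _
  calc meanDeviation γ μ ν e
      ≤ ∫⁻ x, ∫⁻ y, ∫⁻ z, ‖secant γ x y - secant γ y z‖ₑ + ‖secant γ y z - e‖ₑ ∂κ ∂ν ∂μ :=
        lintegral_mono fun x => lintegral_mono (htriangle x)
    _ = meanTurning γ μ ν κ + meanDeviation γ ν κ e := by
        simp only [lintegral_add_right _ hmeas.of_uncurry_left,
          lintegral_add_right _ hmeas.lintegral_prod_right, lintegral_add_right _ measurable_const,
          lintegral_const, measure_univ, mul_one, meanTurning, meanDeviation]

lemma enorm_sub_le_meanDeviation_add [IsProbabilityMeasure μ] [IsProbabilityMeasure ν]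
    (hγ : Continuous γ) (e e' : V) :
    ‖e - e'‖ₑ ≤ meanDeviation γ μ ν e + meanDeviation γ μ ν e' := by
  have hmeas := measurable_enorm_secant_sub hγ e'
  calc ‖e - e'‖ₑ = ∫⁻ _, ∫⁻ _, ‖e - e'‖ₑ ∂ν ∂μ := by simp
    _ ≤ ∫⁻ x, ∫⁻ y, ‖secant γ x y - e‖ₑ + ‖secant γ x y - e'‖ₑ ∂ν ∂μ :=
        lintegral_mono fun x => lintegral_mono fun y => by
          simpa only [edist_eq_enorm_sub] using edist_triangle_left e e' (secant γ x y)
    _ = meanDeviation γ μ ν e + meanDeviation γ μ ν e' := by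
        simp only [lintegral_add_right _ hmeas.of_uncurry_left,
          lintegral_add_right _ hmeas.lintegral_prod_right, meanDeviation]

variable {μ ν} in
lemma meanDeviation_cond_le {s t : Set ℝ} (hs : MeasurableSet s) (ht : MeasurableSet t)
    {e : V} {ε : ℝ≥0∞} (hε : ∀ x ∈ s, ∀ y ∈ t, ‖secant γ x y - e‖ₑ ≤ ε) :
    meanDeviation γ μ[|s] ν[|t] e ≤ ε := by
  have hmean : ∀ (ρ : Measure ℝ) [IsZeroOrProbabilityMeasure ρ] (f : ℝ → ℝ≥0∞),
      (∀ᵐ x ∂ρ, f x ≤ ε) → ∫⁻ x, f x ∂ρ ≤ ε := by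
    intro ρ _ f hf
    calc ∫⁻ x, f x ∂ρ ≤ ∫⁻ _, ε ∂ρ := lintegral_mono_ae hf
      _ = ε * ρ univ := lintegral_const ε
      _ ≤ ε := mul_le_of_le_one_right' prob_le_one
  refine hmean _ _ ((ae_cond_mem hs).mono fun x hx => ?_)
  exact hmean _ _ ((ae_cond_mem ht).mono fun y hy => hε x hx y hy)

end Averages

section Energy

variable {n : ℕ} {γ : ℝ → EuclideanSpace ℝ (Fin n)} {p q : ℝ} {s t : Set ℝ}

/-- The Menger energy of the part over `s` of the unit-speed curve `γ`. -/
def localMenger (p q : ℝ) (γ : ℝ → EuclideanSpace ℝ (Fin n)) (s : Set ℝ) : ℝ≥0∞ :=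
  ∫⁻ x in s, ∫⁻ y in s, ∫⁻ z in s, ENNReal.ofReal (invR p q (γ x) (γ y) (γ z))

lemma localMenger_mono (hst : s ⊆ t) : localMenger p q γ s ≤ localMenger p q γ t :=
  lintegral_mono' (Measure.restrict_mono_set _ hst) fun _ =>
    lintegral_mono' (Measure.restrict_mono_set _ hst) fun _ => lintegral_mono_set hst

lemma setLIntegral_Icc_eq_of_periodic {T : ℝ} (hT : 0 < T) {f : ℝ → ℝ≥0∞}
    (hf : Function.Periodic f T) (u : ℝ) :
    ∫⁻ x in Icc u (u + T), f x = ∫⁻ x in Ico 0 T, f x := by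
  have hIoc : ∫⁻ x in Ioc u (u + T), f x = ∫⁻ x in Ioc 0 (0 + T), f x :=
    (isAddFundamentalDomain_Ioc hT u).setLIntegral_eq
      (isAddFundamentalDomain_Ioc hT 0) f hf.map_vadd_zmultiples
  rw [← setLIntegral_congr Ioc_ae_eq_Icc, hIoc, zero_add, setLIntegral_congr Ico_ae_eq_Ioc]

lemma localMenger_Icc_add_one (hγ : Function.Periodic γ 1) {γ' : ℝ → EuclideanSpace ℝ (Fin n)}
    (hγ' : ∀ u, ‖γ' u‖ = 1) (u : ℝ) :
    localMenger p q γ (Icc u (u + 1)) = menger p q γ γ' := by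
  simp only [localMenger, menger, hγ', one_mul]
  have hinner : ∀ x y, Function.Periodic
      (fun z => ENNReal.ofReal (invR p q (γ x) (γ y) (γ z))) 1 := fun x y z => by
    simp only [hγ z]
  have hmiddle : ∀ x, Function.Periodic
      (fun y => ∫⁻ z in Ico 0 1, ENNReal.ofReal (invR p q (γ x) (γ y) (γ z))) 1 := fun x y => by
    simp only [hγ y]
  have houter : Function.Periodic (fun x => ∫⁻ y in Ico 0 1, ∫⁻ z in Ico 0 1,
      ENNReal.ofReal (invR p q (γ x) (γ y) (γ z))) 1 := fun x => by
    simp only [hγ x]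
  simp only [setLIntegral_Icc_eq_of_periodic one_pos (hinner _ _),
    setLIntegral_Icc_eq_of_periodic one_pos (hmiddle _),
    setLIntegral_Icc_eq_of_periodic one_pos houter]

/-- The paper's Hölder exponent `α`. -/
def holderExp (p q : ℝ) : ℝ :=
  3 * (p - 1) / q - 2

lemma holderExp_pos (hq : 0 < q) (hp : 2 / 3 * q + 1 < p) : 0 < holderExp p q := by
  rw [holderExp, sub_pos, lt_div_iff₀ hq]
  linarith

lemma inv_cube_mul_rpow_mul_rpow_eq {c r : ℝ} (hc : 0 < c) (hr : 0 < r) (hq : q ≠ 0) :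
    ((c * r) ^ 3)⁻¹ * ((4 / (c * r) ^ 2) ^ q * (r ^ 3) ^ p)
      = (4 * c ^ (-(2 + 3 / q)) * r ^ holderExp p q) ^ q := by
  refine Real.log_injOn_pos (mem_Ioi.2 (by positivity)) (mem_Ioi.2 (by positivity)) ?_
  rw [Real.log_rpow (by positivity), Real.log_mul (by positivity) (by positivity),
    Real.log_mul (by positivity) (by positivity), Real.log_mul (by positivity) (by positivity),
    Real.log_mul (by positivity) (by positivity), Real.log_inv, Real.log_pow,
    Real.log_rpow (by positivity), Real.log_rpow (by positivity), Real.log_rpow hc,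
    Real.log_rpow hr, Real.log_pow, Real.log_div (by positivity) (by positivity), Real.log_pow,
    Real.log_mul hc.ne' hr.ne', holderExp]
  field_simp
  push_cast
  ring

lemma meanTurning_cond_rpow_le (hq : 1 ≤ q) {X Y Z : Set ℝ} (hX : MeasurableSet X)
    (hY : MeasurableSet Y) (hZ : MeasurableSet Z) (hXs : X ⊆ s) (hYs : Y ⊆ s) (hZs : Z ⊆ s)
    {m : ℝ≥0∞} (hm : m ≠ 0) (hmX : m ≤ volume X) (hmY : m ≤ volume Y) (hmZ : m ≤ volume Z)
    {g : ℝ → ℝ → ℝ → ℝ≥0∞}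
    (hg : ∀ x ∈ X, ∀ y ∈ Y, ∀ z ∈ Z, ‖secant γ x y - secant γ y z‖ₑ ^ q ≤ g x y z) :
    meanTurning γ volume[|X] volume[|Y] volume[|Z] ^ q
      ≤ (m ^ 3)⁻¹ * ∫⁻ x in s, ∫⁻ y in s, ∫⁻ z in s, g x y z := by
  have hm' : m⁻¹ ≠ ⊤ := ENNReal.inv_ne_top.2 hm
  calc meanTurning γ volume[|X] volume[|Y] volume[|Z] ^ q
      ≤ m⁻¹ * ∫⁻ x in s, m⁻¹ * ∫⁻ y in s, m⁻¹ * ∫⁻ z in s, g x y z :=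
        rpow_lintegral_cond_le hq hX hXs hmX fun x hx =>
          rpow_lintegral_cond_le hq hY hYs hmY fun y hy =>
            rpow_lintegral_cond_le hq hZ hZs hmZ (hg x hx y hy)
    _ = (m ^ 3)⁻¹ * ∫⁻ x in s, ∫⁻ y in s, ∫⁻ z in s, g x y z := by
        simp only [lintegral_const_mul' _ _ hm', ENNReal.inv_pow]
        ring

lemma NearlyStraightOn.meanTurning_cond_le (hs : NearlyStraightOn γ s) (hγ : LipschitzWith 1 γ)
    (hp : 0 ≤ p) (hq : 1 ≤ q) {c r : ℝ} (hc : 0 < c) (hr : 0 < r) {X Y Z : Set ℝ}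
    (hX : MeasurableSet X) (hY : MeasurableSet Y) (hZ : MeasurableSet Z)
    (hXs : X ⊆ s) (hYs : Y ⊆ s) (hZs : Z ⊆ s)
    (hmX : ENNReal.ofReal (c * r) ≤ volume X) (hmY : ENNReal.ofReal (c * r) ≤ volume Y)
    (hmZ : ENNReal.ofReal (c * r) ≤ volume Z)
    (hXY : ∀ x ∈ X, ∀ y ∈ Y, |x - y| ∈ Icc (c * r) r)
    (hYZ : ∀ y ∈ Y, ∀ z ∈ Z, |y - z| ∈ Icc (c * r) r)
    (hXZ : ∀ x ∈ X, ∀ z ∈ Z, |x - z| ∈ Icc (c * r) r) :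
    meanTurning γ volume[|X] volume[|Y] volume[|Z]
      ≤ ENNReal.ofReal (4 * c ^ (-(2 + 3 / q)) * r ^ holderExp p q)
        * localMenger p q γ s ^ (1 / q) := by
  have hq0 : 0 < q := one_pos.trans_le hq
  have hcr : 0 < c * r := mul_pos hc hr
  set k : ℝ := (4 / (c * r) ^ 2) ^ q * (r ^ 3) ^ p
  have hpointwise : ∀ x ∈ X, ∀ y ∈ Y, ∀ z ∈ Z, ‖secant γ x y - secant γ y z‖ₑ ^ q
      ≤ ENNReal.ofReal k * ENNReal.ofReal (invR p q (γ x) (γ y) (γ z)) := by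
    intro x hx y hy z hz
    rw [← ofReal_norm, ENNReal.ofReal_rpow_of_nonneg (norm_nonneg _) hq0.le,
      ← ENNReal.ofReal_mul (by positivity)]
    exact ENNReal.ofReal_le_ofReal (hs.norm_secant_sub_secant_rpow_le hγ hp hq0.le hc hr (hXs hx)
      (hYs hy) (hZs hz) (hXY x hx y hy) (hYZ y hy z hz) (hXZ x hx z hz))
  rw [← ENNReal.rpow_le_rpow_iff hq0]
  calc meanTurning γ volume[|X] volume[|Y] volume[|Z] ^ q
      ≤ (ENNReal.ofReal (c * r) ^ 3)⁻¹ * (ENNReal.ofReal k * localMenger p q γ s) := by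
        simpa only [lintegral_const_mul' _ _ ENNReal.ofReal_ne_top] using!
          meanTurning_cond_rpow_le hq hX hY hZ hXs hYs hZs (ENNReal.ofReal_pos.2 hcr).ne' hmX hmY
            hmZ hpointwise
    _ = ENNReal.ofReal (((c * r) ^ 3)⁻¹ * k) * localMenger p q γ s := by
        rw [← ENNReal.ofReal_pow hcr.le, ← ENNReal.ofReal_inv_of_pos (by positivity), ← mul_assoc,
          ← ENNReal.ofReal_mul (by positivity)]
    _ = _ := by
        rw [inv_cube_mul_rpow_mul_rpow_eq hc hr hq0.ne', ENNReal.mul_rpow_of_nonneg _ _ hq0.le,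
          ENNReal.ofReal_rpow_of_nonneg (by positivity) hq0.le, one_div,
          ENNReal.rpow_inv_rpow hq0.ne']

end Energy

section Arcs

/-- The middle third of the segment from `c` to `c + h`, where `h` may be negative. -/
def arc (c h : ℝ) : Set ℝ :=
  Metric.closedBall (c + h / 2) (|h| / 6)

variable {c h k : ℝ}

lemma abs_div_four (h : ℝ) : |h / 4| = |h| / 4 := by
  rw [abs_div, Nat.abs_ofNat]

lemma measurableSet_arc : MeasurableSet (arc c h) :=
  measurableSet_closedBall

lemma volume_arc : volume (arc c h) = ENNReal.ofReal (|h| / 3) := by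
  rw [arc, Real.volume_closedBall]
  ring_nf

lemma isProbabilityMeasure_cond_arc (hh : h ≠ 0) : IsProbabilityMeasure volume[|arc c h] := by
  refine cond_isProbabilityMeasure_of_finite ?_ ?_
  · rw [volume_arc, ← pos_iff_ne_zero, ENNReal.ofReal_pos]
    positivity
  · simp [volume_arc]

lemma arc_add_neg (c h : ℝ) : arc (c + h) (-h) = arc c h := by
  rw [arc, arc, abs_neg]
  ring_nf

lemma abs_sub_le_of_mem_arc {x : ℝ} (hx : x ∈ arc c h) :
    |x - (c + h / 2)| ≤ |h| / 6 := by
  rwa [arc, Metric.mem_closedBall, Real.dist_eq] at hx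

lemma abs_sub_mem_Icc_of_mem_arc {x : ℝ} (hx : x ∈ arc c h) :
    |x - c| ∈ Icc (|h| / 3) (2 * |h| / 3) := by
  have hdist := abs_sub_le_of_mem_arc hx
  have hmid : |c + h / 2 - c| = |h| / 2 := by rw [add_sub_cancel_left, abs_div, abs_two]
  constructor
  · linarith [abs_sub_le (c + h / 2) x c, abs_sub_comm (c + h / 2) x]
  · linarith [abs_sub_le x (c + h / 2) c]

lemma abs_sub_mem_Icc_of_mem_arc_of_mem_arc {x y : ℝ} (hx : x ∈ arc c h) (hy : y ∈ arc c k)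
    (hk : |k| ≤ |h| / 4) : |x - y| ∈ Icc (|h| / 6) |h| := by
  have hx' := abs_sub_mem_Icc_of_mem_arc hx
  have hy' := abs_sub_mem_Icc_of_mem_arc hy
  constructor
  · linarith [abs_sub_le x y c, hx'.1, hy'.2]
  · linarith [abs_sub_le x c y, abs_sub_comm c y, hx'.2, hy'.2, abs_nonneg h]

lemma abs_sub_mem_Icc_of_mem_opposite_arcs {x y : ℝ} (hx : x ∈ arc c (h / 4))
    (hy : y ∈ arc (c + h) (-h / 4)) : |x - y| ∈ Icc (|h| / 6) |h| := by
  have hx' := abs_le.1 (abs_sub_le_of_mem_arc hx)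
  have hy' := abs_le.1 (abs_sub_le_of_mem_arc hy)
  rw [abs_div_four] at hx' hy'
  rw [abs_neg] at hy'
  rw [mem_Icc, le_abs, abs_le]
  rcases abs_cases h with ⟨habs, _⟩ | ⟨habs, _⟩
  · exact ⟨Or.inr (by linarith), by linarith, by linarith⟩
  · exact ⟨Or.inl (by linarith), by linarith, by linarith⟩

lemma arc_subset_uIcc : arc c h ⊆ uIcc c (c + h) := by
  intro x hx
  have hx' := abs_le.1 (abs_sub_le_of_mem_arc hx)
  rcases abs_cases h with ⟨habs, _⟩ | ⟨habs, _⟩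
  · exact mem_uIcc.2 (Or.inl ⟨by linarith, by linarith⟩)
  · exact mem_uIcc.2 (Or.inr ⟨by linarith, by linarith⟩)

lemma uIcc_add_div_subset (hk : 1 ≤ k) : uIcc c (c + h / k) ⊆ uIcc c (c + h) := by
  refine uIcc_subset_uIcc_left ?_
  rw [div_eq_inv_mul]
  exact (convex_uIcc c (c + h)).add_smul_mem left_mem_uIcc right_mem_uIcc
    ⟨inv_nonneg.2 (zero_le_one.trans hk), inv_le_one_of_one_le₀ hk⟩

end Arcs

section MeanEstimates

variable {V : Type*} [NormedAddCommGroup V] [NormedSpace ℝ V]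

/-- The mean distance to `e` of the secants of `γ` between two arcs at `c` of scales `h` and
`h / 4`. -/
def arcDeviation (γ : ℝ → V) (c h : ℝ) (e : V) : ℝ≥0∞ :=
  meanDeviation γ volume[|arc c h] volume[|arc c (h / 4)] e

lemma tendsto_arcDeviation {γ : ℝ → V} (hγ : ContDiff ℝ 1 γ) {c : ℝ} (hc : ‖deriv γ c‖ = 1) :
    Tendsto (fun h => arcDeviation γ c h (deriv γ c)) (𝓝[≠] 0) (𝓝 0) := by
  rw [ENNReal.tendsto_nhds_zero]
  intro ε hε
  obtain ⟨η, hη, hηε⟩ := ENNReal.lt_iff_exists_nnreal_btwn.1 hε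
  obtain ⟨δ, hδ, hsecant⟩ :=
    exists_forall_mem_ball_norm_secant_sub_deriv_le hγ hc (NNReal.coe_pos.2 (ENNReal.coe_pos.1 hη))
  filter_upwards [self_mem_nhdsWithin, nhdsWithin_le_nhds (Metric.ball_mem_nhds 0 hδ)] with h hh hhδ
  rw [Metric.mem_ball, dist_zero_right, Real.norm_eq_abs] at hhδ
  have hquarter : |h / 4| = |h| / 4 := abs_div_four h
  have hball : ∀ {k x : ℝ}, |k| ≤ |h| → x ∈ arc c k → x ∈ Metric.ball c δ := by
    intro k x hk hx
    rw [Metric.mem_ball, Real.dist_eq]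
    linarith [(abs_sub_mem_Icc_of_mem_arc hx).2, abs_nonneg k]
  refine (meanDeviation_cond_le measurableSet_arc measurableSet_arc fun x hx y hy => ?_).trans
    hηε.le
  have hxy : x ≠ y := by
    have hlow := (abs_sub_mem_Icc_of_mem_arc_of_mem_arc hx hy hquarter.le).1
    have hpos := abs_pos.2 hh
    exact sub_ne_zero.1 (abs_pos.1 (by linarith))
  rw [enorm_le_coe, ← NNReal.coe_le_coe, coe_nnnorm]
  exact hsecant x (hball le_rfl hx) y (hball (by linarith [abs_nonneg h]) hy) hxy

/-- The constant in the estimate of the mean turning between three arcs in a segment of length `r`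
whose lengths and mutual distances are at least `r / 48`. -/
def turningConst (q : ℝ) : ℝ :=
  4 * (1 / 48) ^ (-(2 + 3 / q))

lemma turningConst_pos (q : ℝ) : 0 < turningConst q := by
  unfold turningConst
  positivity

variable {n : ℕ} {γ : ℝ → EuclideanSpace ℝ (Fin n)} {p q : ℝ} {s : Set ℝ}

lemma NearlyStraightOn.meanTurning_arcs_le (hs : NearlyStraightOn γ s) (hγ : LipschitzWith 1 γ)
    (hp : 0 ≤ p) (hq : 1 ≤ q) {r : ℝ} (hr : 0 < r) {a₁ a₂ a₃ h₁ h₂ h₃ : ℝ}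
    (h₁s : arc a₁ h₁ ⊆ s) (h₂s : arc a₂ h₂ ⊆ s) (h₃s : arc a₃ h₃ ⊆ s)
    (hr₁ : r / 16 ≤ |h₁|) (hr₂ : r / 16 ≤ |h₂|) (hr₃ : r / 16 ≤ |h₃|)
    (h₁₂ : ∀ x ∈ arc a₁ h₁, ∀ y ∈ arc a₂ h₂, |x - y| ∈ Icc (r / 48) r)
    (h₂₃ : ∀ y ∈ arc a₂ h₂, ∀ z ∈ arc a₃ h₃, |y - z| ∈ Icc (r / 48) r)
    (h₁₃ : ∀ x ∈ arc a₁ h₁, ∀ z ∈ arc a₃ h₃, |x - z| ∈ Icc (r / 48) r) :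
    meanTurning γ volume[|arc a₁ h₁] volume[|arc a₂ h₂] volume[|arc a₃ h₃]
      ≤ ENNReal.ofReal (turningConst q * r ^ holderExp p q) * localMenger p q γ s ^ (1 / q) := by
  have hvol : ∀ {a h : ℝ}, r / 16 ≤ |h| → ENNReal.ofReal (1 / 48 * r) ≤ volume (arc a h) := by
    intro a h hh
    rw [volume_arc]
    exact ENNReal.ofReal_le_ofReal (by linarith)
  rw [div_eq_inv_mul, ← one_div] at h₁₂ h₂₃ h₁₃
  exact hs.meanTurning_cond_le hγ hp hq (by norm_num) hr measurableSet_arc measurableSet_arc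
    measurableSet_arc h₁s h₂s h₃s (hvol hr₁) (hvol hr₂) (hvol hr₃) h₁₂ h₂₃ h₁₃

end MeanEstimates

section NearlyStraightMorrey

lemma le_tsum_of_le_add {a d : ℕ → ℝ≥0∞} (had : ∀ k, d k ≤ a k + d (k + 1))
    (hd : Tendsto d atTop (𝓝 0)) : d 0 ≤ ∑' k, a k := by
  have hpartial : ∀ N, d 0 ≤ ∑ k ∈ Finset.range N, a k + d N := by
    intro N
    induction N with
    | zero => simp
    | succ N ih =>
      rw [Finset.sum_range_succ, add_assoc]
      exact ih.trans (add_le_add_right (had N) _)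
  have hlim : Tendsto (fun N => ∑' k, a k + d N) atTop (𝓝 (∑' k, a k)) := by
    simpa using tendsto_const_nhds.add hd
  exact ge_of_tendsto' hlim fun N =>
    (hpartial N).trans (add_le_add_left (ENNReal.sum_le_tsum _) _)

lemma tendsto_div_pow_nhdsNE {b h : ℝ} (hb : 1 < b) (hh : h ≠ 0) :
    Tendsto (fun k : ℕ => h / b ^ k) atTop (𝓝[≠] 0) := by
  have hne : ∀ k : ℕ, h / b ^ k ≠ 0 := fun k => div_ne_zero hh (pow_pos (one_pos.trans hb) k).ne'
  exact tendsto_nhdsWithin_iff.2 ⟨tendsto_const_nhds.div_atTop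
    (tendsto_pow_atTop_atTop_of_one_lt hb), Eventually.of_forall hne⟩

variable {n : ℕ} {γ : ℝ → EuclideanSpace ℝ (Fin n)} {p q c h : ℝ} {s : Set ℝ}

lemma NearlyStraightOn.arcDeviation_le_add (hs : NearlyStraightOn γ s) (hγ : LipschitzWith 1 γ)
    (hp : 0 ≤ p) (hq : 1 ≤ q) (hh : h ≠ 0) (hcs : uIcc c (c + h) ⊆ s)
    (e : EuclideanSpace ℝ (Fin n)) :
    arcDeviation γ c h e
      ≤ ENNReal.ofReal (turningConst q * |h| ^ holderExp p q) * localMenger p q γ s ^ (1 / q)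
        + arcDeviation γ c (h / 4) e := by
  have habs : 0 < |h| := abs_pos.2 hh
  have hh₂ : |h / 4| = |h| / 4 := abs_div_four h
  have hh₃ : |h / 4 / 4| = |h| / 16 := by rw [abs_div_four, hh₂]; ring
  have hsub : ∀ {k : ℝ}, 1 ≤ k → arc c (h / k) ⊆ s := fun hk =>
    (arc_subset_uIcc.trans (uIcc_add_div_subset hk)).trans hcs
  have := isProbabilityMeasure_cond_arc (c := c) hh
  have := isProbabilityMeasure_cond_arc (c := c) (div_ne_zero hh four_ne_zero)
  have := isProbabilityMeasure_cond_arc (c := c)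
    (div_ne_zero (div_ne_zero hh four_ne_zero) four_ne_zero)
  have hturn := hs.meanTurning_arcs_le hγ hp hq habs (a₁ := c) (a₂ := c) (a₃ := c) (h₁ := h)
    (h₂ := h / 4) (h₃ := h / 4 / 4) (by simpa using hsub le_rfl) (hsub (by norm_num))
    (by rw [div_div]; exact hsub (by norm_num)) (by linarith) (by linarith) hh₃.ge
    (fun x hx y hy => Icc_subset_Icc_left (by linarith)
      (abs_sub_mem_Icc_of_mem_arc_of_mem_arc hx hy hh₂.le))
    (fun y hy z hz => Icc_subset_Icc (by linarith) (by linarith)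
      (abs_sub_mem_Icc_of_mem_arc_of_mem_arc hy hz (abs_div_four _).le))
    (fun x hx z hz => Icc_subset_Icc_left (by linarith)
      (abs_sub_mem_Icc_of_mem_arc_of_mem_arc hx hz (by linarith)))
  exact (meanDeviation_le_meanTurning_add _ _ _ hγ.continuous e).trans (add_le_add_left hturn _)

lemma NearlyStraightOn.arcDeviation_deriv_le (hs : NearlyStraightOn γ s) (hγ : LipschitzWith 1 γ)
    (hγ₁ : ContDiff ℝ 1 γ) (hp : 0 ≤ p) (hq : 1 ≤ q) (hc : ‖deriv γ c‖ = 1) (hh : h ≠ 0)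
    (hcs : uIcc c (c + h) ⊆ s) :
    arcDeviation γ c h (deriv γ c)
      ≤ (1 - ENNReal.ofReal ((1 / 4) ^ holderExp p q))⁻¹
        * (ENNReal.ofReal (turningConst q * |h| ^ holderExp p q)
          * localMenger p q γ s ^ (1 / q)) := by
  set α := holderExp p q
  set L := localMenger p q γ s ^ (1 / q)
  have hstep : ∀ k : ℕ, arcDeviation γ c (h / 4 ^ k) (deriv γ c)
      ≤ ENNReal.ofReal (turningConst q * |h / 4 ^ k| ^ α) * L
        + arcDeviation γ c (h / 4 ^ (k + 1)) (deriv γ c) := by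
    intro k
    rw [pow_succ, ← div_div]
    exact hs.arcDeviation_le_add hγ hp hq (by positivity)
      ((uIcc_add_div_subset (one_le_pow₀ (by norm_num))).trans hcs) _
  have hscale : ∀ k : ℕ, ENNReal.ofReal (turningConst q * |h / 4 ^ k| ^ α) * L
      = ENNReal.ofReal ((1 / 4) ^ α) ^ k * (ENNReal.ofReal (turningConst q * |h| ^ α) * L) := by
    intro k
    have hpow : |h / 4 ^ k| ^ α = ((1 / 4) ^ α) ^ k * |h| ^ α := by
      rw [Real.rpow_pow_comm (by norm_num), ← Real.mul_rpow (by positivity) (by positivity),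
        div_eq_inv_mul, abs_mul, abs_of_nonneg (by positivity : (0 : ℝ) ≤ (4 ^ k)⁻¹), one_div,
        inv_pow]
    rw [hpow, mul_left_comm, ENNReal.ofReal_mul (by positivity), ENNReal.ofReal_pow (by positivity),
      mul_assoc]
  have hlim := (tendsto_arcDeviation hγ₁ hc).comp
    (tendsto_div_pow_nhdsNE (by norm_num : (1 : ℝ) < 4) hh)
  calc arcDeviation γ c h (deriv γ c)
      ≤ ∑' k : ℕ, ENNReal.ofReal (turningConst q * |h / 4 ^ k| ^ α) * L := by
        simpa using le_tsum_of_le_add hstep hlim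
    _ = _ := by simp only [hscale, ENNReal.tsum_mul_right, ENNReal.tsum_geometric]

lemma NearlyStraightOn.arcDeviation_le_add_reverse (hs : NearlyStraightOn γ s)
    (hγ : LipschitzWith 1 γ) (hp : 0 ≤ p) (hq : 1 ≤ q) (hh : h ≠ 0) (hcs : uIcc c (c + h) ⊆ s)
    (e : EuclideanSpace ℝ (Fin n)) :
    arcDeviation γ c h e
      ≤ ENNReal.ofReal (turningConst q * |h| ^ holderExp p q) * localMenger p q γ s ^ (1 / q)
        + arcDeviation γ (c + h) (-h) e := by
  have habs : 0 < |h| := abs_pos.2 hh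
  have hquarter : |h / 4| = |h| / 4 := abs_div_four h
  have hquarter' : |-h / 4| = |h| / 4 := by rw [abs_div_four, abs_neg]
  have hend : uIcc (c + h) (c + h + -h) ⊆ s := by rwa [add_neg_cancel_right, uIcc_comm]
  have hfour : (1 : ℝ) ≤ 4 := by norm_num
  have hsub : arc c (h / 4) ⊆ s := (arc_subset_uIcc.trans (uIcc_add_div_subset hfour)).trans hcs
  have hsub' : arc (c + h) (-h / 4) ⊆ s :=
    (arc_subset_uIcc.trans (uIcc_add_div_subset hfour)).trans hend
  have := isProbabilityMeasure_cond_arc (c := c) hh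
  have := isProbabilityMeasure_cond_arc (c := c) (div_ne_zero hh four_ne_zero)
  have := isProbabilityMeasure_cond_arc (c := c + h) (div_ne_zero (neg_ne_zero.2 hh) four_ne_zero)
  have hturn := hs.meanTurning_arcs_le hγ hp hq habs (a₁ := c) (a₂ := c) (a₃ := c + h)
    (h₁ := h / 4) (h₂ := h) (h₃ := -h / 4) hsub (arc_subset_uIcc.trans hcs) hsub'
    (by linarith) (by linarith) (by linarith)
    (fun x hx y hy => abs_sub_comm y x ▸ Icc_subset_Icc_left (by linarith)
      (abs_sub_mem_Icc_of_mem_arc_of_mem_arc hy hx hquarter.le))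
    (fun y hy z hz => Icc_subset_Icc (by rw [abs_neg]; linarith) (abs_neg h).le
      (abs_sub_mem_Icc_of_mem_arc_of_mem_arc (arc_add_neg c h ▸ hy) hz
        (by rw [hquarter', abs_neg])))
    (fun x hx z hz => Icc_subset_Icc_left (by linarith)
      (abs_sub_mem_Icc_of_mem_opposite_arcs hx hz))
  rw [arcDeviation, arcDeviation, meanDeviation_comm _ _ hγ.continuous, arc_add_neg]
  exact (meanDeviation_le_meanTurning_add _ _ _ hγ.continuous e).trans (add_le_add_left hturn _)

/-- The constant in the Morrey estimate on a nearly straight arc: the secants converge to the two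
end tangents at the rate of a geometric series of ratio `(1 / 4) ^ α`, and one more turning leads
from one end to the other. -/
def straightMorreyConst (p q : ℝ) : ℝ≥0∞ :=
  ENNReal.ofReal (turningConst q)
    * (1 + 2 * (1 - ENNReal.ofReal ((1 / 4) ^ holderExp p q))⁻¹)

lemma straightMorreyConst_ne_top (hpq : 0 < holderExp p q) : straightMorreyConst p q ≠ ⊤ := by
  have hratio : 1 - ENNReal.ofReal ((1 / 4) ^ holderExp p q) ≠ 0 :=
    (tsub_pos_of_lt (ENNReal.ofReal_lt_one.2
      (Real.rpow_lt_one (by norm_num) (by norm_num) hpq))).ne'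
  unfold straightMorreyConst
  finiteness

lemma straightMorreyConst_ne_zero : straightMorreyConst p q ≠ 0 :=
  mul_ne_zero (ENNReal.ofReal_pos.2 (turningConst_pos q)).ne' (by simp)

lemma NearlyStraightOn.enorm_deriv_sub_le (hs : NearlyStraightOn γ (uIcc c (c + h)))
    (hγ : ContDiff ℝ 1 γ) (hunit : ∀ u, ‖deriv γ u‖ = 1) (hp : 0 ≤ p) (hq : 1 ≤ q) :
    ‖deriv γ (c + h) - deriv γ c‖ₑ
      ≤ straightMorreyConst p q * ENNReal.ofReal (|h| ^ holderExp p q)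
        * localMenger p q γ (uIcc c (c + h)) ^ (1 / q) := by
  rcases eq_or_ne h 0 with rfl | hh
  · simp
  have hlip : LipschitzWith 1 γ := lipschitzWith_of_nnnorm_deriv_le
    (hγ.differentiable one_ne_zero) fun u => (NNReal.coe_le_coe.1 (hunit u).le)
  have hend : uIcc (c + h) (c + h + -h) ⊆ uIcc c (c + h) := by
    rw [add_neg_cancel_right, uIcc_comm]
  have := isProbabilityMeasure_cond_arc (c := c) hh
  have := isProbabilityMeasure_cond_arc (c := c) (div_ne_zero hh four_ne_zero)
  set T := ENNReal.ofReal (turningConst q * |h| ^ holderExp p q)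
    * localMenger p q γ (uIcc c (c + h)) ^ (1 / q)
  set G := (1 - ENNReal.ofReal ((1 / 4) ^ holderExp p q))⁻¹
  have hstart_deviation : arcDeviation γ c h (deriv γ c) ≤ G * T :=
    hs.arcDeviation_deriv_le hlip hγ hp hq (hunit c) hh Subset.rfl
  have hend_deviation : arcDeviation γ (c + h) (-h) (deriv γ (c + h)) ≤ G * T := by
    simpa only [abs_neg] using
      hs.arcDeviation_deriv_le hlip hγ hp hq (hunit (c + h)) (neg_ne_zero.2 hh) hend
  calc ‖deriv γ (c + h) - deriv γ c‖ₑ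
      ≤ arcDeviation γ c h (deriv γ (c + h)) + arcDeviation γ c h (deriv γ c) :=
        enorm_sub_le_meanDeviation_add _ _ hlip.continuous _ _
    _ ≤ (T + G * T) + G * T := by
        gcongr
        exact (hs.arcDeviation_le_add_reverse hlip hp hq hh Subset.rfl _).trans (by gcongr)
    _ = _ := by
        simp only [T, straightMorreyConst, ENNReal.ofReal_mul (turningConst_pos q).le]
        ring

end NearlyStraightMorrey

section Morrey

lemma norm_sub_lt_of_bootstrap {V : Type*} [NormedAddCommGroup V] {f : ℝ → V} (hf : Continuous f)
    {a b ε : ℝ} (hε : 0 < ε)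
    (hstep : ∀ x ∈ Icc a b, (∀ t ∈ Icc a x, ‖f t - f a‖ ≤ ε) → ‖f x - f a‖ < ε) {x : ℝ}
    (hx : x ∈ Icc a b) : ‖f x - f a‖ < ε := by
  set S := {t | ‖f t - f a‖ ≤ ε}
  have hclosed : IsClosed S := isClosed_le (by fun_prop) continuous_const
  have hsub : Icc a b ⊆ S := by
    refine (hclosed.inter isClosed_Icc).Icc_subset_of_forall_mem_nhdsGT_of_Icc_subset
      (by simp [S, hε.le]) fun t ht hat => ?_
    have hlt := hstep t (Ico_subset_Icc_self ht) fun u hu => hat hu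
    have hnear : ∀ᶠ u in 𝓝 t, ‖f u - f a‖ < ε :=
      (by fun_prop : Continuous fun u => ‖f u - f a‖).continuousAt.eventually_lt_const hlt
    exact mem_nhdsWithin_of_mem_nhds (hnear.mono fun u hu => hu.le)
  exact hstep x hx fun t ht => hsub ⟨ht.1, ht.2.trans hx.2⟩

variable {n : ℕ} {γ : ℝ → EuclideanSpace ℝ (Fin n)} {p q : ℝ}

lemma enorm_deriv_sub_le_of_norm_deriv_sub_le (hγ : ContDiff ℝ 1 γ)
    (hunit : ∀ u, ‖deriv γ u‖ = 1) (hp : 0 ≤ p) (hq : 1 ≤ q) {a b : ℝ} (hab : a ≤ b)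
    (hclose : ∀ t ∈ Icc a b, ‖deriv γ t - deriv γ a‖ ≤ 1 / 4) :
    ‖deriv γ b - deriv γ a‖ₑ
      ≤ straightMorreyConst p q * ENNReal.ofReal ((b - a) ^ holderExp p q)
        * localMenger p q γ (Icc a b) ^ (1 / q) := by
  have hIcc : uIcc a (a + (b - a)) = Icc a b := by rw [add_sub_cancel, uIcc_of_le hab]
  have hnear : NearlyStraightOn γ (uIcc a (a + (b - a))) :=
    hIcc ▸ nearlyStraightOn_of_norm_deriv_sub_le (hγ.differentiable one_ne_zero)
      (convex_Icc a b) (hunit a) hclose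
  have hmorrey := hnear.enorm_deriv_sub_le hγ hunit hp hq
  rwa [hIcc, add_sub_cancel, abs_of_nonneg (sub_nonneg.2 hab)] at hmorrey

/-- The constant `C` of the Morrey estimate. -/
def morreyConst (p q : ℝ) : ℝ≥0∞ :=
  8 * straightMorreyConst p q

lemma morreyConst_ne_zero : morreyConst p q ≠ 0 :=
  mul_ne_zero (by norm_num) straightMorreyConst_ne_zero

lemma morreyConst_ne_top (hpq : 0 < holderExp p q) : morreyConst p q ≠ ⊤ :=
  ENNReal.mul_ne_top (by norm_num) (straightMorreyConst_ne_top hpq)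

/-- If the right-hand side is not so large that the estimate is trivial, then it prevents the
tangent from turning by more than `1 / 4`, so that the arc is nearly straight. -/
lemma enorm_deriv_sub_le_localMenger (hγ : ContDiff ℝ 1 γ) (hunit : ∀ u, ‖deriv γ u‖ = 1)
    (hp : 0 ≤ p) (hq : 1 ≤ q) (hpq : 0 ≤ holderExp p q) {a b : ℝ} (hab : a ≤ b) :
    ‖deriv γ b - deriv γ a‖ₑ
      ≤ morreyConst p q * ENNReal.ofReal ((b - a) ^ holderExp p q)
        * localMenger p q γ (Icc a b) ^ (1 / q) := by
  set B := straightMorreyConst p q * ENNReal.ofReal ((b - a) ^ holderExp p q)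
    * localMenger p q γ (Icc a b) ^ (1 / q) with hB
  suffices ‖deriv γ b - deriv γ a‖ₑ ≤ 8 * B by simpa only [hB, morreyConst, mul_assoc] using this
  rcases le_or_gt (ENNReal.ofReal (1 / 4)) B with hlarge | hsmall
  · have hnorm : ‖deriv γ b - deriv γ a‖ ≤ 8 * (1 / 4) := by
      linarith [norm_sub_le (deriv γ b) (deriv γ a), hunit a, hunit b]
    calc ‖deriv γ b - deriv γ a‖ₑ ≤ ENNReal.ofReal (8 * (1 / 4)) := by
          rw [← ofReal_norm]
          exact ENNReal.ofReal_le_ofReal hnorm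
      _ = 8 * ENNReal.ofReal (1 / 4) := by simp [ENNReal.ofReal_mul]
      _ ≤ 8 * B := by gcongr
  have hstraight : ∀ x ∈ Icc a b, (∀ t ∈ Icc a x, ‖deriv γ t - deriv γ a‖ ≤ 1 / 4) →
      ‖deriv γ x - deriv γ a‖ₑ ≤ B := by
    intro x hx hclose
    have hxa : 0 ≤ x - a := sub_nonneg.2 hx.1
    refine (enorm_deriv_sub_le_of_norm_deriv_sub_le hγ hunit hp hq hx.1 hclose).trans ?_
    rw [hB]
    gcongr
    exacts [hx.2, localMenger_mono (Icc_subset_Icc_right hx.2)]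
  have hturn : ∀ x ∈ Icc a b, ‖deriv γ x - deriv γ a‖ < 1 / 4 := fun x hx =>
    norm_sub_lt_of_bootstrap (hγ.continuous_deriv le_rfl) (by norm_num) (fun y hy hclose => by
      rw [← ENNReal.ofReal_lt_ofReal_iff (by norm_num), ofReal_norm]
      exact (hstraight y hy hclose).trans_lt hsmall) hx
  calc ‖deriv γ b - deriv γ a‖ₑ ≤ B :=
        hstraight b (right_mem_Icc.2 hab) fun t ht => (hturn t ht).le
    _ ≤ 8 * B := le_mul_of_one_le_left' (by norm_num)

lemma enorm_deriv_add_sub_le_menger (hγ : ContDiff ℝ 1 γ) (hper : Function.Periodic γ 1)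
    (hunit : ∀ u, ‖deriv γ u‖ = 1) (hp : 0 ≤ p) (hq : 1 ≤ q) (hpq : 0 ≤ holderExp p q)
    {w : ℝ} (hw : 0 ≤ w) (u : ℝ) :
    ‖deriv γ (u + w) - deriv γ u‖ₑ
      ≤ morreyConst p q * ENNReal.ofReal (w ^ holderExp p q)
        * menger p q γ (deriv γ) ^ (1 / q) := by
  have hperiodic : deriv γ (u + w) = deriv γ (u + Int.fract w) := by
    have hderiv : Function.Periodic (deriv γ) 1 := fun x => by
      rw [← deriv_comp_add_const, funext hper]
    rw [← hderiv.sub_zsmul_eq ⌊w⌋, zsmul_one, add_sub_assoc, Int.self_sub_floor]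
  have hfract : Int.fract w ≤ w := sub_le_self w (by exact_mod_cast Int.floor_nonneg.2 hw)
  rw [hperiodic]
  refine (enorm_deriv_sub_le_localMenger hγ hunit hp hq hpq
    (le_add_of_nonneg_right (Int.fract_nonneg w))).trans ?_
  rw [add_sub_cancel_left, ← localMenger_Icc_add_one hper hunit u]
  have := Int.fract_nonneg w
  gcongr
  exact localMenger_mono (Icc_subset_Icc_right (by linarith [Int.fract_lt_one w]))

end Morrey

theorem morrey_estimate_general (p q : ℝ) (hq : 1 ≤ q) (hp : 2 / 3 * q + 1 < p) :
    ∃ C : ℝ, 0 < C ∧ ∀ (n : ℕ) (γ : ℝ → EuclideanSpace ℝ (Fin n)),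
      ContDiff ℝ 1 γ → Function.Periodic γ 1 → (∀ u, ‖deriv γ u‖ = 1) →
      menger p q γ (deriv γ) < ⊤ → ∀ w u : ℝ,
        ‖deriv γ (u + w) - deriv γ u‖
          ≤ C * (menger p q γ (deriv γ)).toReal ^ (1 / q) * |w| ^ (3 * (p - 1) / q - 2) := by
  have hq0 : 0 < q := one_pos.trans_le hq
  have hp0 : 0 ≤ p := by linarith
  have hpq : 0 < holderExp p q := holderExp_pos hq0 hp
  have hC : morreyConst p q ≠ ⊤ := morreyConst_ne_top hpq
  refine ⟨(morreyConst p q).toReal, ENNReal.toReal_pos morreyConst_ne_zero hC,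
    fun n γ hγ hper hunit hE w u => ?_⟩
  have habs : ‖deriv γ (u + w) - deriv γ u‖ₑ ≤ morreyConst p q
      * ENNReal.ofReal (|w| ^ holderExp p q) * menger p q γ (deriv γ) ^ (1 / q) := by
    rcases le_total 0 w with hw | hw
    · rw [abs_of_nonneg hw]
      exact enorm_deriv_add_sub_le_menger hγ hper hunit hp0 hq hpq.le hw u
    · rw [abs_of_nonpos hw, ← enorm_neg, neg_sub]
      simpa using
        enorm_deriv_add_sub_le_menger hγ hper hunit hp0 hq hpq.le (neg_nonneg.2 hw) (u + w)
  have hfinite : menger p q γ (deriv γ) ^ (1 / q) ≠ ⊤ :=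
    ENNReal.rpow_ne_top_of_nonneg (by positivity) hE.ne
  have hreal := ENNReal.toReal_mono (by finiteness) habs
  rw [toReal_enorm, ENNReal.toReal_mul, ENNReal.toReal_mul, ← ENNReal.toReal_rpow,
    ENNReal.toReal_ofReal (by positivity), holderExp] at hreal
  linarith

/-- **Morrey-type estimate.** In the sub-critical range `q > 1`,
`(2/3)q + 1 < p < q + 2/3`, with `α := 3(p-1)/q - 2 ∈ (0,1)`, there is a
constant `C = C(p,q)` such that every injective arc-length parametrized
`C¹` curve of finite energy satisfies
`sup_u |γ'(u+w) - γ'(u)| ≤ C E_{p,q}(γ)^{1/q} |w|^α` for `w ∈ [-1/2,1/2]`. -/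
theorem morrey_estimate (n : ℕ) (p q : ℝ)
    (hq : 1 < q) (hp₁ : 2/3 * q + 1 < p) (hp₂ : p < q + 2/3) :
    ∃ C : ℝ, 0 < C ∧
      ∀ γ : ℝ → EuclideanSpace ℝ (Fin n),
        ContDiff ℝ 1 γ → Function.Periodic γ 1 → InjCircle γ →
        (∀ u, ‖deriv γ u‖ = 1) → menger p q γ (deriv γ) < ⊤ →
        ∀ w ∈ Icc (-(1/2) : ℝ) (1/2), ∀ u : ℝ,
          ‖deriv γ (u + w) - deriv γ u‖ ≤
            C * (menger p q γ (deriv γ)).toReal ^ (1/q) *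
              |w| ^ (3*(p-1)/q - 2) := by
  obtain ⟨C, hC, hmorrey⟩ := morrey_estimate_general p q hq.le hp₁
  exact ⟨C, hC, fun γ hγ hper _ hunit hE w _ => hmorrey n γ hγ hper hunit hE w⟩
end
end
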